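/- arXiv:2406.08400 — 2 statements merged into one kernel-verified Lean document; each statement's English description precedes it below -/
import Mathlib

section
/- Let s > 3/4. There exists a constant C > 0 such that for every T with 0 < T ≤ 1 and every Schwartz function u₀ : ℝ → ℂ one has ( ∫_ℝ ( sup_{|t| ≤ T} |(e^{−t∂_x³}u₀)(x)| )² dx )^{1/2} ≤ C ( ∫_ℝ (1+|ξ|)^{2s} |û₀(ξ)|² dξ )^{1/2}. -/
open MeasureTheory ENNReal

/-
`T T*` method. Smoothing by `⟨ξ⟩^{-2s}` turns the maximal estimate into a bound for vectors `v x t`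
of `L²(ℝ)` whose Gram matrix is `K(x - y, t - r)`, where `K(x, t) = ∫ ⟨ξ⟩^{-2s} e^{i(xξ + tξ³)} dξ`.
If the Gram matrix is dominated, uniformly in the times, by `k(x - y)` with `k` integrable, then
Schur's test gives a Bessel inequality for `x ↦ v x (τ x)` with every measurable choice of times
`τ`, hence the bound for the supremum. For `|t| ≤ 2` the kernel is `O(⟨x⟩^{-(s + 1/4)})`, integrable
exactly when `s > 3/4`: non-stationary phase up to the frequency where `φ'` has dropped by half, and
van der Corput's second-derivative test around the stationary points `|ξ| ~ √(x / |t|)` and beyond.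
-/

section Schur

theorem ennreal_two_mul_le_add_sq (a b : ℝ≥0∞) : 2 * a * b ≤ a ^ 2 + b ^ 2 := by
  wlog hab : a ≤ b generalizing a b
  · simpa only [mul_right_comm, add_comm] using this b a (le_of_not_ge hab)
  obtain ⟨c, rfl⟩ := exists_add_of_le hab
  calc 2 * a * (a + c) ≤ 2 * a * (a + c) + c ^ 2 := le_self_add
    _ = a ^ 2 + (a + c) ^ 2 := by ring

variable {X Y : Type*} [MeasurableSpace X] [MeasurableSpace Y] {μ : Measure X} {ν : Measure Y}

theorem two_mul_lintegral_kernel_le [SFinite μ] [SFinite ν] {k : X → Y → ℝ≥0∞} {f : X → ℝ≥0∞}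
    {g : Y → ℝ≥0∞} {A B : ℝ≥0∞} (hk : Measurable (Function.uncurry k)) (hf : Measurable f)
    (hg : Measurable g) (hA : ∀ x, ∫⁻ y, k x y ∂ν ≤ A) (hB : ∀ y, ∫⁻ x, k x y ∂μ ≤ B) :
    2 * ∫⁻ x, f x * ∫⁻ y, k x y * g y ∂ν ∂μ ≤
      A * ∫⁻ x, f x ^ 2 ∂μ + B * ∫⁻ y, g y ^ 2 ∂ν := by
  have hkx (x : X) : Measurable (k x) := hk.of_uncurry_left
  have hky (y : Y) : Measurable fun x ↦ k x y := hk.of_uncurry_right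
  have pointwise (x : X) : 2 * (f x * ∫⁻ y, k x y * g y ∂ν) ≤
      f x ^ 2 * ∫⁻ y, k x y ∂ν + ∫⁻ y, k x y * g y ^ 2 ∂ν := by
    rw [← lintegral_const_mul (f x) (by fun_prop), ← lintegral_const_mul 2 (by fun_prop),
      ← lintegral_const_mul (f x ^ 2) (hkx x), ← lintegral_add_left (by fun_prop)]
    refine lintegral_mono fun y ↦ ?_
    calc 2 * (f x * (k x y * g y)) = k x y * (2 * f x * g y) := by ring
      _ ≤ k x y * (f x ^ 2 + g y ^ 2) := by gcongr; exact ennreal_two_mul_le_add_sq _ _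
      _ = f x ^ 2 * k x y + k x y * g y ^ 2 := by ring
  calc 2 * ∫⁻ x, f x * ∫⁻ y, k x y * g y ∂ν ∂μ
      ≤ ∫⁻ x, (f x ^ 2 * ∫⁻ y, k x y ∂ν + ∫⁻ y, k x y * g y ^ 2 ∂ν) ∂μ := by
        rw [← lintegral_const_mul' _ _ ofNat_ne_top]
        exact lintegral_mono pointwise
    _ = ∫⁻ x, f x ^ 2 * ∫⁻ y, k x y ∂ν ∂μ + ∫⁻ y, g y ^ 2 * ∫⁻ x, k x y ∂μ ∂ν := by
        rw [lintegral_add_left (by fun_prop (disch := exact hk.lintegral_prod_right)),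
          lintegral_lintegral_swap (hk.mul ((hg.comp measurable_snd).pow_const 2)).aemeasurable]
        congr 1
        refine lintegral_congr fun y ↦ ?_
        rw [← lintegral_const_mul _ (hky y)]
        exact lintegral_congr fun x ↦ mul_comm _ _
    _ ≤ ∫⁻ x, f x ^ 2 * A ∂μ + ∫⁻ y, g y ^ 2 * B ∂ν := by
        gcongr with x y
        exacts [hA x, hB y]
    _ = A * ∫⁻ x, f x ^ 2 ∂μ + B * ∫⁻ y, g y ^ 2 ∂ν := by
        rw [lintegral_mul_const _ (hf.pow_const 2), lintegral_mul_const _ (hg.pow_const 2),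
          mul_comm A, mul_comm B]

theorem lintegral_symm_kernel_le [SFinite μ] {k : X → X → ℝ≥0∞} {f : X → ℝ≥0∞} {M : ℝ≥0∞}
    (hk : Measurable (Function.uncurry k)) (hsymm : ∀ x y, k x y = k y x) (hf : Measurable f)
    (hM : ∀ x, ∫⁻ y, k x y ∂μ ≤ M) :
    ∫⁻ x, f x * ∫⁻ y, k x y * f y ∂μ ∂μ ≤ M * ∫⁻ x, f x ^ 2 ∂μ := by
  refine (ENNReal.mul_le_mul_iff_right two_ne_zero ofNat_ne_top).1 ?_
  rw [two_mul (M * _)]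
  exact two_mul_lintegral_kernel_le hk hf hf hM fun y ↦ by simpa only [hsymm] using hM y

end Schur

section Bessel

variable {𝕜 H X : Type*} [RCLike 𝕜] [NormedAddCommGroup H] [InnerProductSpace 𝕜 H]
  [CompleteSpace H] [MeasurableSpace X] {μ : Measure X} {v : X → H} {R : ℝ} {M : ℝ≥0∞}

local notation "⟪" x ", " y "⟫" => inner 𝕜 x y

theorem enorm_integral_smul_sq_le [NormedSpace ℝ H] [SFinite μ] {c : X → 𝕜}
    (hv : StronglyMeasurable v) (hc : Measurable c) (hcv : Integrable (fun x ↦ c x • v x) μ)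
    (hM : ∀ x, ∫⁻ y, ‖⟪v x, v y⟫‖ₑ ∂μ ≤ M) :
    ‖∫ x, c x • v x ∂μ‖ₑ ^ 2 ≤ M * ∫⁻ x, ‖c x‖ₑ ^ 2 ∂μ := by
  set y := ∫ x, c x • v x ∂μ with hy
  have inner_le (x : X) : ‖⟪y, v x⟫‖ₑ ≤ ∫⁻ z, ‖⟪v x, v z⟫‖ₑ * ‖c z‖ₑ ∂μ := by
    rw [← enorm_norm, norm_inner_symm, enorm_norm, hy, ← integral_inner hcv]
    refine (enorm_integral_le_lintegral_enorm _).trans (lintegral_mono fun z ↦ ?_)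
    rw [inner_smul_right, enorm_mul, mul_comm]
  have inner_measurable : Measurable (Function.uncurry fun x z ↦ ‖⟪v x, v z⟫‖ₑ) :=
    ((hv.comp_measurable measurable_fst).inner
      (hv.comp_measurable measurable_snd)).measurable.enorm
  calc ‖y‖ₑ ^ 2 = ‖⟪y, y⟫‖ₑ := by
        rw [inner_self_eq_norm_sq_to_K, enorm_pow, ← enorm_norm (_ : 𝕜), RCLike.norm_ofReal,
          abs_norm, enorm_norm]
    _ = ‖∫ x, ⟪y, c x • v x⟫ ∂μ‖ₑ := by rw [integral_inner hcv]
    _ ≤ ∫⁻ x, ‖⟪y, c x • v x⟫‖ₑ ∂μ := enorm_integral_le_lintegral_enorm _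
    _ ≤ ∫⁻ x, ‖c x‖ₑ * ∫⁻ z, ‖⟪v x, v z⟫‖ₑ * ‖c z‖ₑ ∂μ ∂μ := by
        gcongr with x
        rw [inner_smul_right, enorm_mul]
        gcongr
        exact inner_le x
    _ ≤ M * ∫⁻ x, ‖c x‖ₑ ^ 2 ∂μ :=
        lintegral_symm_kernel_le inner_measurable
          (fun x z ↦ by rw [← enorm_norm, norm_inner_symm, enorm_norm]) hc.enorm hM

theorem lintegral_enorm_inner_sq_le_of_isFiniteMeasure [IsFiniteMeasure μ]
    (hv : StronglyMeasurable v) (hR : ∀ x, ‖v x‖ ≤ R)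
    (hM : ∀ x, ∫⁻ y, ‖⟪v x, v y⟫‖ₑ ∂μ ≤ M) (b : H) :
    ∫⁻ x, ‖⟪v x, b⟫‖ₑ ^ 2 ∂μ ≤ M * ‖b‖ₑ ^ 2 := by
  let := NormedSpace.restrictScalars ℝ 𝕜 H
  set P := ∫⁻ x, ‖⟪v x, b⟫‖ₑ ^ 2 ∂μ
  have hc : StronglyMeasurable fun x ↦ ⟪v x, b⟫ := hv.inner stronglyMeasurable_const
  have c_le (x : X) : ‖⟪v x, b⟫‖ ≤ R * ‖b‖ :=
    (norm_inner_le_norm _ _).trans (by gcongr; exact hR x)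
  have hcv : Integrable (fun x ↦ ⟪v x, b⟫ • v x) μ :=
    .of_bound (hc.smul hv).aestronglyMeasurable (R * ‖b‖ * R) <| .of_forall fun x ↦ by
      rw [norm_smul]
      exact mul_le_mul (c_le x) (hR x) (norm_nonneg _) ((norm_nonneg _).trans (c_le x))
  have P_eq : P = ‖⟪b, ∫ x, ⟪v x, b⟫ • v x ∂μ⟫‖ₑ := by
    have integrand_eq (x : X) : ⟪b, ⟪v x, b⟫ • v x⟫ = ((‖⟪v x, b⟫‖ ^ 2 : ℝ) : 𝕜) := by
      rw [inner_smul_right, mul_comm, ← inner_conj_symm b, RCLike.conj_mul, RCLike.ofReal_pow]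
    have hc_sq : Integrable (fun x ↦ ‖⟪v x, b⟫‖ ^ 2) μ :=
      .of_bound (hc.norm.pow 2).aestronglyMeasurable ((R * ‖b‖) ^ 2) <| .of_forall fun x ↦ by
        rw [norm_pow, norm_norm]
        gcongr
        exact c_le x
    rw [← integral_inner hcv, integral_congr_ae (.of_forall integrand_eq), integral_ofReal,
      ← ofReal_norm, RCLike.norm_ofReal, abs_of_nonneg (integral_nonneg fun x ↦ by positivity),
      ofReal_integral_eq_lintegral_ofReal hc_sq (.of_forall fun x ↦ by positivity)]
    simp only [ENNReal.ofReal_pow (norm_nonneg _), ofReal_norm, P]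
  have P_ne_top : P ≠ ∞ := by rw [P_eq]; exact enorm_ne_top
  have P_sq_le : P * P ≤ M * ‖b‖ₑ ^ 2 * P := by
    calc P * P = ‖⟪b, ∫ x, ⟪v x, b⟫ • v x ∂μ⟫‖ₑ ^ 2 := by rw [P_eq, sq]
      _ ≤ (‖b‖ₑ * ‖∫ x, ⟪v x, b⟫ • v x ∂μ‖ₑ) ^ 2 := by
        gcongr
        simp only [← ofReal_norm, ← ENNReal.ofReal_mul (norm_nonneg _)]
        exact ENNReal.ofReal_le_ofReal (norm_inner_le_norm _ _)
      _ ≤ ‖b‖ₑ ^ 2 * (M * P) := by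
        rw [mul_pow]
        gcongr
        exact enorm_integral_smul_sq_le hv hc.measurable hcv hM
      _ = M * ‖b‖ₑ ^ 2 * P := by ring
  rcases eq_or_ne P 0 with hP | hP
  · exact hP.trans_le zero_le
  · exact (ENNReal.mul_le_mul_iff_left hP P_ne_top).1 P_sq_le

theorem lintegral_enorm_inner_sq_le [SigmaFinite μ] (hv : StronglyMeasurable v)
    (hR : ∀ x, ‖v x‖ ≤ R) (hM : ∀ x, ∫⁻ y, ‖⟪v x, v y⟫‖ₑ ∂μ ≤ M) (b : H) :
    ∫⁻ x, ‖⟪v x, b⟫‖ₑ ^ 2 ∂μ ≤ M * ‖b‖ₑ ^ 2 := by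
  refine lintegral_le_of_forall_fin_meas_le _ fun S _ hS ↦ ?_
  have : Fact (μ S < ∞) := ⟨hS.lt_top⟩
  exact lintegral_enorm_inner_sq_le_of_isFiniteMeasure hv hR
    (fun x ↦ (setLIntegral_le_lintegral S _).trans (hM x)) b

end Bessel

section MaximalFunction

variable {X : Type*} [MeasurableSpace X]

theorem exists_measurable_forall_le {F : ℕ → X → ℝ≥0∞} (hF : ∀ n, Measurable (F n)) (n : ℕ) :
    ∃ N : X → ℕ, Measurable N ∧ ∀ x, ∀ k ≤ n, F k x ≤ F (N x) x := by
  induction n with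
  | zero => exact ⟨fun _ ↦ 0, measurable_const, fun x k hk ↦ by rw [Nat.le_zero.1 hk]⟩
  | succ n ih =>
    obtain ⟨N, hN, le_N⟩ := ih
    have hFN : Measurable fun x ↦ F (N x) x :=
      (measurable_from_prod_countable_right (f := Function.uncurry F) hF).comp
        (hN.prodMk measurable_id)
    refine ⟨fun x ↦ if F (N x) x ≤ F (n + 1) x then n + 1 else N x,
      .ite (measurableSet_le hFN (hF _)) measurable_const hN, fun x k hk ↦ ?_⟩
    dsimp only
    rcases Nat.le_succ_iff.1 hk with hk | rfl <;> split_ifs with h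
    exacts [(le_N x k hk).trans h, le_N x k hk, le_rfl, (not_le.1 h).le]

theorem lintegral_iSup_le_of_forall_measurable {μ : Measure X} {F : ℕ → X → ℝ≥0∞} {B : ℝ≥0∞}
    (hF : ∀ n, Measurable (F n)) (hB : ∀ N : X → ℕ, Measurable N → ∫⁻ x, F (N x) x ∂μ ≤ B) :
    ∫⁻ x, ⨆ n, F n x ∂μ ≤ B := by
  calc ∫⁻ x, ⨆ n, F n x ∂μ = ∫⁻ x, ⨆ n, ⨆ k ≤ n, F k x ∂μ := by
        simp only [biSup_le_eq_iSup]
    _ = ⨆ n, ∫⁻ x, ⨆ k ≤ n, F k x ∂μ :=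
        lintegral_iSup (fun n ↦ .biSup _ (Set.to_countable _) fun k _ ↦ hF k)
          fun m n hmn x ↦ biSup_mono fun k hk ↦ hk.trans hmn
    _ ≤ B := iSup_le fun n ↦ by
        obtain ⟨N, hN, le_N⟩ := exists_measurable_forall_le hF n
        exact (lintegral_mono fun x ↦ iSup₂_le (le_N x)).trans (hB N hN)

variable {𝕜 H T : Type*} [RCLike 𝕜] [NormedAddCommGroup H] [InnerProductSpace 𝕜 H]
  [CompleteSpace H] [TopologicalSpace T] [TopologicalSpace.SeparableSpace T]

theorem lintegral_iSup_enorm_inner_sq_le {μ : Measure X} [SigmaFinite μ] {v : X → T → H} {R : ℝ}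
    {k : X → X → ℝ≥0∞} {M : ℝ≥0∞} (hv : ∀ t, StronglyMeasurable (v · t))
    (hcont : ∀ x, Continuous (v x)) (hR : ∀ x t, ‖v x t‖ ≤ R)
    (hk : ∀ x y t r, ‖inner 𝕜 (v x t) (v y r)‖ₑ ≤ k x y) (hM : ∀ x, ∫⁻ y, k x y ∂μ ≤ M) (b : H) :
    ∫⁻ x, ⨆ t, ‖inner 𝕜 (v x t) b‖ₑ ^ 2 ∂μ ≤ M * ‖b‖ₑ ^ 2 := by
  obtain hT | hT := isEmpty_or_nonempty T
  · simp
  let q := TopologicalSpace.denseSeq T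
  have iSup_eq (x : X) : ⨆ t, ‖inner 𝕜 (v x t) b‖ₑ ^ 2 = ⨆ n, ‖inner 𝕜 (v x (q n)) b‖ₑ ^ 2 := by
    have hx : Continuous fun t ↦ ‖inner 𝕜 (v x t) b‖ₑ ^ 2 := by fun_prop
    exact ((TopologicalSpace.denseRange_denseSeq T).ciSup' hx).symm.trans
      (iSup_range' (fun t ↦ ‖inner 𝕜 (v x t) b‖ₑ ^ 2) q)
  simp only [iSup_eq]
  have hinner (n : ℕ) : Measurable fun x ↦ ‖inner 𝕜 (v x (q n)) b‖ₑ ^ 2 :=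
    ((hv _).inner stronglyMeasurable_const).enorm.pow_const 2
  refine lintegral_iSup_le_of_forall_measurable hinner fun N hN ↦ ?_
  have hvN : StronglyMeasurable fun x ↦ v x (q (N x)) :=
    (stronglyMeasurable_uncurry_of_continuous_of_stronglyMeasurable (u := fun n x ↦ v x (q n))
      (fun _ ↦ continuous_of_discreteTopology) fun _ ↦ hv _).comp_measurable
      (hN.prodMk measurable_id)
  exact lintegral_enorm_inner_sq_le hvN (fun x ↦ hR x _)
    (fun x ↦ (lintegral_mono fun y ↦ hk x y _ _).trans (hM x)) b

end MaximalFunction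

section OscillatoryIntegral

open Set

theorem norm_integral_antitone_smul_le {E : Type*} [NormedAddCommGroup E] [NormedSpace ℝ E]
    [CompleteSpace E] {f f' : ℝ → ℝ} {g : ℝ → E} {a b A : ℝ} (hab : a ≤ b)
    (hf : ∀ ξ ∈ Icc a b, HasDerivAt f (f' ξ) ξ) (hf' : ContinuousOn f' (Icc a b))
    (f'_nonpos : ∀ ξ ∈ Icc a b, f' ξ ≤ 0) (f_nonneg : 0 ≤ f b) (hg : ContinuousOn g (Icc a b))
    (hA : ∀ u ∈ Icc a b, ‖∫ ξ in a..u, g ξ‖ ≤ A) :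
    ‖∫ ξ in a..b, f ξ • g ξ‖ ≤ A * f a := by
  let G (u : ℝ) : E := ∫ ξ in a..u, g ξ
  rw [← uIcc_of_le hab] at *
  have hG (u) (hu : u ∈ uIcc a b) : HasDerivWithinAt G (g u) (uIcc a b) u := by
    have : Fact (u ∈ uIcc a b) := ⟨hu⟩
    exact intervalIntegral.integral_hasDerivWithinAt_right
      (hg.intervalIntegrable.mono_set (uIcc_subset_uIcc_left hu))
      (hg.stronglyMeasurableAtFilter_nhdsWithin measurableSet_uIcc u) (hg u hu)
  have integral_f' : ∫ ξ in a..b, f' ξ = f b - f a :=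
    intervalIntegral.integral_eq_sub_of_hasDerivAt hf hf'.intervalIntegrable
  have integral_le : ‖∫ ξ in a..b, f' ξ • G ξ‖ ≤ A * (f a - f b) := by
    calc ‖∫ ξ in a..b, f' ξ • G ξ‖ ≤ ∫ ξ in a..b, A * -f' ξ := by
          refine intervalIntegral.norm_integral_le_of_norm_le hab (.of_forall fun ξ hξ ↦ ?_)
            (hf'.neg.const_smul A).intervalIntegrable
          have hξ' : ξ ∈ uIcc a b := Ioc_subset_Icc_self.trans_eq (uIcc_of_le hab).symm hξ
          rw [norm_smul, Real.norm_of_nonpos (f'_nonpos ξ hξ'), mul_comm]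
          exact mul_le_mul_of_nonneg_right (hA ξ hξ') (neg_nonneg.2 (f'_nonpos ξ hξ'))
      _ = A * (f a - f b) := by
          rw [intervalIntegral.integral_const_mul, intervalIntegral.integral_neg, integral_f',
            neg_sub]
  calc ‖∫ ξ in a..b, f ξ • g ξ‖ = ‖f b • G b - ∫ ξ in a..b, f' ξ • G ξ‖ := by
        rw [intervalIntegral.integral_smul_deriv_eq_deriv_smul_of_hasDerivWithinAt
          (fun ξ hξ ↦ (hf ξ hξ).hasDerivWithinAt) hG hf'.intervalIntegrable hg.intervalIntegrable]
        simp only [G, intervalIntegral.integral_same, smul_zero, sub_zero]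
    _ ≤ f b * A + A * (f a - f b) := by
        refine norm_sub_le_of_le ?_ integral_le
        rw [norm_smul, Real.norm_of_nonneg f_nonneg]
        exact mul_le_mul_of_nonneg_left (hA b right_mem_uIcc) f_nonneg
    _ = A * f a := by ring

/-- The oscillatory integral `∫ₐᵇ f e^{iφ}` with real phase `φ` and real amplitude `f`. -/
noncomputable def oscIntegral (φ f : ℝ → ℝ) (a b : ℝ) : ℂ :=
  ∫ ξ in a..b, f ξ • Complex.exp (φ ξ * Complex.I)

variable {φ φ' φ'' φ''' f f' f'' q q' q'' : ℝ → ℝ} {a b : ℝ}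

theorem norm_smul_exp_mul_I (r θ : ℝ) : ‖r • Complex.exp (θ * Complex.I)‖ = |r| := by
  rw [norm_smul, Complex.norm_exp_ofReal_mul_I, mul_one, Real.norm_eq_abs]

theorem norm_oscIntegral_le (hab : a ≤ b) : ‖oscIntegral φ f a b‖ ≤ ∫ ξ in a..b, |f ξ| := by
  refine (intervalIntegral.norm_integral_le_integral_norm hab).trans_eq ?_
  simp only [norm_smul_exp_mul_I]

theorem oscIntegral_add_adjacent {c : ℝ} (hφ : ContinuousOn φ (Icc a c))
    (hf : ContinuousOn f (Icc a c)) (hb : b ∈ Icc a c) :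
    oscIntegral φ f a b + oscIntegral φ f b c = oscIntegral φ f a c := by
  have hφf : ContinuousOn (fun ξ ↦ f ξ • Complex.exp (φ ξ * Complex.I)) (Icc a c) := by fun_prop
  exact intervalIntegral.integral_add_adjacent_intervals
    ((hφf.mono (Icc_subset_Icc_right hb.2)).intervalIntegrable_of_Icc hb.1)
    ((hφf.mono (Icc_subset_Icc_left hb.1)).intervalIntegrable_of_Icc hb.2)

theorem norm_oscIntegral_neg_neg (hφ : φ.Odd) (hf : f.Even) :
    ‖oscIntegral φ f (-b) (-a)‖ = ‖oscIntegral φ f a b‖ := by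
  have conj_eq (ξ : ℝ) : f (-ξ) • Complex.exp (φ (-ξ) * Complex.I) =
      starRingEnd ℂ (f ξ • Complex.exp (φ ξ * Complex.I)) := by
    rw [hφ, hf, Complex.real_smul, Complex.real_smul, map_mul, Complex.conj_ofReal,
      ← Complex.exp_conj, map_mul, Complex.conj_ofReal, Complex.conj_I, Complex.ofReal_neg,
      neg_mul_comm]
  rw [oscIntegral, ← intervalIntegral.integral_comp_neg, oscIntegral, ← RCLike.norm_conj]
  simp only [conj_eq, intervalIntegral, map_sub, integral_conj, RCLike.conj_conj]

theorem I_mul_oscIntegral_deriv_mul (hab : a ≤ b) (hφ : ∀ ξ ∈ Icc a b, HasDerivAt φ (φ' ξ) ξ)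
    (hf : ∀ ξ ∈ Icc a b, HasDerivAt f (f' ξ) ξ) (hφ' : ContinuousOn φ' (Icc a b))
    (hf' : ContinuousOn f' (Icc a b)) :
    Complex.I * oscIntegral φ (fun ξ ↦ φ' ξ * f ξ) a b =
      f b • Complex.exp (φ b * Complex.I) - f a • Complex.exp (φ a * Complex.I) -
        oscIntegral φ f' a b := by
  have hφc : ContinuousOn φ (Icc a b) := HasDerivAt.continuousOn hφ
  have hexp (ξ) (hξ : ξ ∈ Icc a b) : HasDerivAt (fun ξ ↦ Complex.exp (φ ξ * Complex.I))
      (Complex.exp (φ ξ * Complex.I) * (φ' ξ * Complex.I)) ξ :=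
    ((hφ ξ hξ).ofReal_comp.mul_const _).cexp
  rw [← uIcc_of_le hab] at *
  rw [oscIntegral, oscIntegral, ← intervalIntegral.integral_smul_deriv_eq_deriv_smul hf hexp
    hf'.intervalIntegrable (ContinuousOn.intervalIntegrable (by fun_prop)),
    ← intervalIntegral.integral_const_mul]
  congr! 2
  simp only [Complex.real_smul, Complex.ofReal_mul]
  ring

theorem norm_oscIntegral_deriv_mul_le (hab : a ≤ b) (hφ : ∀ ξ ∈ Icc a b, HasDerivAt φ (φ' ξ) ξ)
    (hf : ∀ ξ ∈ Icc a b, HasDerivAt f (f' ξ) ξ) (hφ' : ContinuousOn φ' (Icc a b))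
    (hf' : ContinuousOn f' (Icc a b)) :
    ‖oscIntegral φ (fun ξ ↦ φ' ξ * f ξ) a b‖ ≤ |f a| + |f b| + ‖oscIntegral φ f' a b‖ := by
  calc ‖oscIntegral φ (fun ξ ↦ φ' ξ * f ξ) a b‖
      = ‖Complex.I * oscIntegral φ (fun ξ ↦ φ' ξ * f ξ) a b‖ := by
        rw [norm_mul, Complex.norm_I, one_mul]
    _ ≤ |f b| + |f a| + ‖oscIntegral φ f' a b‖ := by
        rw [I_mul_oscIntegral_deriv_mul hab hφ hf hφ' hf',
          ← norm_smul_exp_mul_I (f a) (φ a), ← norm_smul_exp_mul_I (f b) (φ b)]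
        exact norm_sub_le_of_le (norm_sub_le _ _) le_rfl
    _ = |f a| + |f b| + ‖oscIntegral φ f' a b‖ := by rw [add_comm |f b|]

theorem norm_oscIntegral_le_of_mul_deriv_eq_one (hab : a ≤ b)
    (hφ : ∀ ξ ∈ Icc a b, HasDerivAt φ (φ' ξ) ξ) (hφ' : ContinuousOn φ' (Icc a b))
    (hq : ∀ ξ ∈ Icc a b, φ' ξ * q ξ = 1) {g' : ℝ → ℝ}
    (hqf : ∀ ξ ∈ Icc a b, HasDerivAt (q * f) (g' ξ) ξ) (hg' : ContinuousOn g' (Icc a b)) :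
    ‖oscIntegral φ f a b‖ ≤ |q a * f a| + |q b * f b| + ‖oscIntegral φ g' a b‖ := by
  refine le_of_eq_of_le ?_ (norm_oscIntegral_deriv_mul_le hab hφ hqf hφ' hg')
  congr 1
  refine intervalIntegral.integral_congr fun ξ hξ ↦ ?_
  rw [uIcc_of_le hab] at hξ
  simp only [Pi.mul_apply, ← mul_assoc, hq ξ hξ, one_mul]

theorem abs_mul_add_mul_le {x y z w X Y Z W : ℝ} (hx : |x| ≤ X) (hy : |y| ≤ Y) (hz : |z| ≤ Z)
    (hw : |w| ≤ W) : |x * y + z * w| ≤ X * Y + Z * W := by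
  refine (abs_add_le _ _).trans ?_
  rw [abs_mul, abs_mul]
  exact add_le_add (mul_le_mul hx hy (abs_nonneg y) ((abs_nonneg x).trans hx))
    (mul_le_mul hz hw (abs_nonneg w) ((abs_nonneg z).trans hz))

theorem abs_mul_deriv_mul_le {q q' f f' M κ : ℝ} (q_le : |q| ≤ κ) (q'_le : |q'| ≤ M * κ)
    (f_nonneg : 0 ≤ f) (f'_le : |f'| ≤ M * f) :
    |q * (q' * f + q * f')| ≤ (4 * M ^ 2 + 2 * M) * κ ^ 2 * f := by
  have hκ : 0 ≤ κ := (abs_nonneg _).trans q_le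
  calc |q * (q' * f + q * f')| ≤ κ * (M * κ * f + κ * (M * f)) := by
        rw [abs_mul]
        gcongr
        exact abs_mul_add_mul_le q'_le (abs_of_nonneg f_nonneg).le q_le f'_le
    _ = 2 * M * κ ^ 2 * f := by ring
    _ ≤ (4 * M ^ 2 + 2 * M) * κ ^ 2 * f := by
        gcongr
        exact le_add_of_nonneg_left (by positivity)

theorem abs_deriv_mul_deriv_mul_le {q q' q'' f f' f'' M κ : ℝ} (q_le : |q| ≤ κ)
    (q'_le : |q'| ≤ M * κ) (q''_le : |q''| ≤ M * κ) (f_nonneg : 0 ≤ f) (f'_le : |f'| ≤ M * f)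
    (f''_le : |f''| ≤ M * f) :
    |q' * (q' * f + q * f') + q * (q'' * f + q' * f' + (q' * f' + q * f''))| ≤
      (4 * M ^ 2 + 2 * M) * κ ^ 2 * f := by
  have f_le : |f| ≤ f := (abs_of_nonneg f_nonneg).le
  have first_le := abs_mul_add_mul_le q'_le f_le q_le f'_le
  have second_le := (abs_add_le _ _).trans <| add_le_add
    (abs_mul_add_mul_le q''_le f_le q'_le f'_le) (abs_mul_add_mul_le q'_le f'_le q_le f''_le)
  exact (abs_mul_add_mul_le q'_le first_le q_le second_le).trans_eq (by ring)

theorem norm_oscIntegral_le_of_abs_deriv_le {M κ : ℝ} (hab : a ≤ b)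
    (hφ : ∀ ξ ∈ Icc a b, HasDerivAt φ (φ' ξ) ξ) (hφ' : ContinuousOn φ' (Icc a b))
    (hφq : ∀ ξ ∈ Icc a b, φ' ξ * q ξ = 1)
    (hq : ∀ ξ ∈ Icc a b, HasDerivAt q (q' ξ) ξ) (hq' : ∀ ξ ∈ Icc a b, HasDerivAt q' (q'' ξ) ξ)
    (hf : ∀ ξ ∈ Icc a b, HasDerivAt f (f' ξ) ξ) (hf' : ∀ ξ ∈ Icc a b, HasDerivAt f' (f'' ξ) ξ)
    (hq'' : ContinuousOn q'' (Icc a b)) (hf'' : ContinuousOn f'' (Icc a b))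
    (q_le : ∀ ξ ∈ Icc a b, |q ξ| ≤ κ) (q'_le : ∀ ξ ∈ Icc a b, |q' ξ| ≤ M * κ)
    (q''_le : ∀ ξ ∈ Icc a b, |q'' ξ| ≤ M * κ) (f_nonneg : ∀ ξ ∈ Icc a b, 0 ≤ f ξ)
    (f'_le : ∀ ξ ∈ Icc a b, |f' ξ| ≤ M * f ξ) (f''_le : ∀ ξ ∈ Icc a b, |f'' ξ| ≤ M * f ξ) :
    ‖oscIntegral φ f a b‖ ≤ κ * (f a + f b) +
      (4 * M ^ 2 + 2 * M) * κ ^ 2 * (f a + f b + ∫ ξ in a..b, f ξ) := by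
  have hqc : ContinuousOn q (Icc a b) := HasDerivAt.continuousOn hq
  have hqc' : ContinuousOn q' (Icc a b) := HasDerivAt.continuousOn hq'
  have hfc : ContinuousOn f (Icc a b) := HasDerivAt.continuousOn hf
  have hfc' : ContinuousOn f' (Icc a b) := HasDerivAt.continuousOn hf'
  let g := q' * f + q * f'
  let h := q' * g + q * (q'' * f + q' * f' + (q' * f' + q * f''))
  have hg (ξ) (hξ : ξ ∈ Icc a b) : HasDerivAt (q * f) (g ξ) ξ := (hq ξ hξ).mul (hf ξ hξ)
  have hh (ξ) (hξ : ξ ∈ Icc a b) : HasDerivAt (q * g) (h ξ) ξ :=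
    (hq ξ hξ).mul (((hq' ξ hξ).mul (hf ξ hξ)).add ((hq ξ hξ).mul (hf' ξ hξ)))
  have qf_le (ξ) (hξ : ξ ∈ Icc a b) : |q ξ * f ξ| ≤ κ * f ξ := by
    rw [abs_mul, abs_of_nonneg (f_nonneg ξ hξ)]
    exact mul_le_mul_of_nonneg_right (q_le ξ hξ) (f_nonneg ξ hξ)
  have qg_le (ξ) (hξ : ξ ∈ Icc a b) : |q ξ * g ξ| ≤ (4 * M ^ 2 + 2 * M) * κ ^ 2 * f ξ :=
    abs_mul_deriv_mul_le (q_le ξ hξ) (q'_le ξ hξ) (f_nonneg ξ hξ) (f'_le ξ hξ)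
  have integral_h_le : ∫ ξ in a..b, |h ξ| ≤ (4 * M ^ 2 + 2 * M) * κ ^ 2 * ∫ ξ in a..b, f ξ := by
    rw [← intervalIntegral.integral_const_mul]
    exact intervalIntegral.integral_mono_on hab
      (ContinuousOn.intervalIntegrable_of_Icc hab (by fun_prop))
      (ContinuousOn.intervalIntegrable_of_Icc hab (by fun_prop)) fun ξ hξ ↦
        abs_deriv_mul_deriv_mul_le (q_le ξ hξ) (q'_le ξ hξ) (q''_le ξ hξ) (f_nonneg ξ hξ)
          (f'_le ξ hξ) (f''_le ξ hξ)
  have a_mem : a ∈ Icc a b := left_mem_Icc.2 hab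
  have b_mem : b ∈ Icc a b := right_mem_Icc.2 hab
  linarith [norm_oscIntegral_le_of_mul_deriv_eq_one hab hφ hφ' hφq hg (by fun_prop),
    norm_oscIntegral_le_of_mul_deriv_eq_one hab hφ hφ' hφq hh (by fun_prop),
    qf_le a a_mem, qf_le b b_mem, qg_le a a_mem, qg_le b b_mem,
    norm_oscIntegral_le (φ := φ) (f := h) hab]

theorem abs_neg_div_sq_le {p p' M l : ℝ} (hl : 0 < l) (hp : l ≤ p) (h : |p'| ≤ M * p) :
    |-p' / p ^ 2| ≤ M * l⁻¹ := by
  have hp0 : 0 < p := hl.trans_le hp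
  have hM : 0 ≤ M := nonneg_of_mul_nonneg_left ((abs_nonneg _).trans h) hp0
  calc |-p' / p ^ 2| = |p'| / p ^ 2 := by rw [abs_div, abs_neg, abs_of_pos (pow_pos hp0 2)]
    _ ≤ M * p / p ^ 2 := by gcongr
    _ = M * p⁻¹ := by field_simp
    _ ≤ M * l⁻¹ := by gcongr

theorem abs_two_mul_sq_div_cube_sub_le {p p' p'' M l : ℝ} (hl : 0 < l) (hp : l ≤ p)
    (h' : |p'| ≤ M * p) (h'' : |p''| ≤ M * p) :
    |2 * p' ^ 2 / p ^ 3 + -p'' / p ^ 2| ≤ (M + 2 * M ^ 2) * l⁻¹ := by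
  have hp0 : 0 < p := hl.trans_le hp
  have sq_le : |2 * p' ^ 2 / p ^ 3| ≤ 2 * M ^ 2 * l⁻¹ := by
    calc |2 * p' ^ 2 / p ^ 3| = 2 * |p'| ^ 2 / p ^ 3 := by
          rw [sq_abs, abs_of_nonneg (by positivity)]
      _ ≤ 2 * (M * p) ^ 2 / p ^ 3 := by gcongr
      _ = 2 * M ^ 2 * p⁻¹ := by field_simp
      _ ≤ 2 * M ^ 2 * l⁻¹ := by gcongr
  exact (abs_add_le _ _).trans
    ((add_le_add sq_le (abs_neg_div_sq_le hl hp h'')).trans_eq (by ring))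

theorem hasDerivAt_neg_div_sq {p p' : ℝ → ℝ} {p'' ξ : ℝ} (hp : HasDerivAt p (p' ξ) ξ)
    (hp' : HasDerivAt p' p'' ξ) (h0 : p ξ ≠ 0) :
    HasDerivAt (fun ξ ↦ -p' ξ / p ξ ^ 2) (2 * p' ξ ^ 2 / p ξ ^ 3 + -p'' / p ξ ^ 2) ξ := by
  refine (hp'.neg.div (hp.pow 2) (pow_ne_zero 2 h0)).congr_deriv ?_
  simp only [Pi.pow_apply, Pi.neg_apply]
  field_simp
  ring

theorem norm_oscIntegral_le_of_abs_deriv_le_mul_deriv {M l : ℝ} (hab : a ≤ b)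
    (hφ : ∀ ξ ∈ Icc a b, HasDerivAt φ (φ' ξ) ξ) (hφ' : ∀ ξ ∈ Icc a b, HasDerivAt φ' (φ'' ξ) ξ)
    (hφ'' : ∀ ξ ∈ Icc a b, HasDerivAt φ'' (φ''' ξ) ξ) (hφ''' : ContinuousOn φ''' (Icc a b))
    (hf : ∀ ξ ∈ Icc a b, HasDerivAt f (f' ξ) ξ) (hf' : ∀ ξ ∈ Icc a b, HasDerivAt f' (f'' ξ) ξ)
    (hf'' : ContinuousOn f'' (Icc a b)) (f_nonneg : ∀ ξ ∈ Icc a b, 0 ≤ f ξ)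
    (hl : 0 < l) (le_φ' : ∀ ξ ∈ Icc a b, l ≤ φ' ξ)
    (φ''_le : ∀ ξ ∈ Icc a b, |φ'' ξ| ≤ M * φ' ξ) (φ'''_le : ∀ ξ ∈ Icc a b, |φ''' ξ| ≤ M * φ' ξ)
    (f'_le : ∀ ξ ∈ Icc a b, |f' ξ| ≤ M * f ξ) (f''_le : ∀ ξ ∈ Icc a b, |f'' ξ| ≤ M * f ξ) :
    ‖oscIntegral φ f a b‖ ≤ l⁻¹ * (f a + f b) +
      (4 * (M + 2 * M ^ 2) ^ 2 + 2 * (M + 2 * M ^ 2)) * l⁻¹ ^ 2 *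
        (f a + f b + ∫ ξ in a..b, f ξ) := by
  have φ'_pos (ξ) (hξ : ξ ∈ Icc a b) : 0 < φ' ξ := hl.trans_le (le_φ' ξ hξ)
  have φ'_ne (ξ) (hξ : ξ ∈ Icc a b) : φ' ξ ≠ 0 := (φ'_pos ξ hξ).ne'
  have hφc' : ContinuousOn φ' (Icc a b) := HasDerivAt.continuousOn hφ'
  have hφc'' : ContinuousOn φ'' (Icc a b) := HasDerivAt.continuousOn hφ''
  have hq'' : ContinuousOn (fun ξ ↦ 2 * φ'' ξ ^ 2 / φ' ξ ^ 3 + -φ''' ξ / φ' ξ ^ 2) (Icc a b) :=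
    (ContinuousOn.div (by fun_prop) (hφc'.pow 3) fun ξ hξ ↦ pow_ne_zero 3 (φ'_ne ξ hξ)).add
      (hφ'''.neg.div (hφc'.pow 2) fun ξ hξ ↦ pow_ne_zero 2 (φ'_ne ξ hξ))
  have hMN : M ≤ M + 2 * M ^ 2 := le_add_of_nonneg_right (by positivity)
  exact norm_oscIntegral_le_of_abs_deriv_le (q := φ'⁻¹) hab hφ hφc'
    (fun ξ hξ ↦ mul_inv_cancel₀ (φ'_ne ξ hξ)) (fun ξ hξ ↦ (hφ' ξ hξ).inv (φ'_ne ξ hξ))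
    (fun ξ hξ ↦ hasDerivAt_neg_div_sq (hφ' ξ hξ) (hφ'' ξ hξ) (φ'_ne ξ hξ)) hf hf' hq'' hf''
    (fun ξ hξ ↦ (abs_of_pos (inv_pos.2 (φ'_pos ξ hξ))).trans_le (inv_anti₀ hl (le_φ' ξ hξ)))
    (fun ξ hξ ↦ (abs_neg_div_sq_le hl (le_φ' ξ hξ) (φ''_le ξ hξ)).trans (by gcongr))
    (fun ξ hξ ↦ abs_two_mul_sq_div_cube_sub_le hl (le_φ' ξ hξ) (φ''_le ξ hξ) (φ'''_le ξ hξ))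
    f_nonneg
    (fun ξ hξ ↦ (f'_le ξ hξ).trans (mul_le_mul_of_nonneg_right hMN (f_nonneg ξ hξ)))
    (fun ξ hξ ↦ (f''_le ξ hξ).trans (mul_le_mul_of_nonneg_right hMN (f_nonneg ξ hξ)))

theorem norm_oscIntegral_one_le_of_le_abs_deriv (hab : a ≤ b)
    (hφ : ∀ ξ ∈ Icc a b, HasDerivAt φ (φ' ξ) ξ) (hφ' : ∀ ξ ∈ Icc a b, HasDerivAt φ' (φ'' ξ) ξ)
    (hφ'' : ContinuousOn φ'' (Icc a b)) (φ''_nonpos : ∀ ξ ∈ Icc a b, φ'' ξ ≤ 0) {l : ℝ}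
    (hl : 0 < l) (l_le : ∀ ξ ∈ Icc a b, l ≤ |φ' ξ|) :
    ‖oscIntegral φ 1 a b‖ ≤ 4 / l := by
  have hφ'c : ContinuousOn φ' (Icc a b) := HasDerivAt.continuousOn hφ'
  have φ'_ne (ξ) (hξ : ξ ∈ Icc a b) : φ' ξ ≠ 0 := abs_pos.1 (hl.trans_le (l_le ξ hξ))
  let q' : ℝ → ℝ := fun ξ ↦ -φ'' ξ / φ' ξ ^ 2
  have hq (ξ) (hξ : ξ ∈ Icc a b) : HasDerivAt φ'⁻¹ (q' ξ) ξ := (hφ' ξ hξ).inv (φ'_ne ξ hξ)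
  have hq'c : ContinuousOn q' (Icc a b) :=
    hφ''.neg.div (hφ'c.pow 2) fun ξ hξ ↦ pow_ne_zero 2 (φ'_ne ξ hξ)
  have q'_nonneg (ξ) (hξ : ξ ∈ Icc a b) : 0 ≤ q' ξ :=
    div_nonneg (neg_nonneg.2 (φ''_nonpos ξ hξ)) (sq_nonneg _)
  have abs_q_le (ξ) (hξ : ξ ∈ Icc a b) : |(φ' ξ)⁻¹| ≤ 1 / l := by
    rw [abs_inv, inv_eq_one_div]
    exact one_div_le_one_div_of_le hl (l_le ξ hξ)
  have hqa := abs_q_le a (left_mem_Icc.2 hab)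
  have hqb := abs_q_le b (right_mem_Icc.2 hab)
  have integral_q' : ∫ ξ in a..b, |q' ξ| = (φ' b)⁻¹ - (φ' a)⁻¹ := by
    rw [← uIcc_of_le hab] at *
    rw [intervalIntegral.integral_congr fun ξ hξ ↦ abs_of_nonneg (q'_nonneg ξ hξ)]
    exact intervalIntegral.integral_eq_sub_of_hasDerivAt hq hq'c.intervalIntegrable
  calc ‖oscIntegral φ 1 a b‖
      ≤ |(φ' a)⁻¹ * 1| + |(φ' b)⁻¹ * 1| + ‖oscIntegral φ q' a b‖ :=
        norm_oscIntegral_le_of_mul_deriv_eq_one (q := φ'⁻¹) (f := 1) hab hφ hφ'c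
          (fun ξ hξ ↦ mul_inv_cancel₀ (φ'_ne ξ hξ)) (by simpa only [mul_one] using hq) hq'c
    _ ≤ 1 / l + 1 / l + (1 / l + 1 / l) := by
        rw [mul_one, mul_one]
        gcongr
        refine (norm_oscIntegral_le hab).trans ?_
        rw [integral_q']
        linarith [le_abs_self (φ' b)⁻¹, neg_abs_le (φ' a)⁻¹]
    _ = 4 / l := by ring

theorem exists_mul_abs_sub_le_abs {g : ℝ → ℝ} {μ : ℝ} (hab : a ≤ b) (hg : ContinuousOn g (Icc a b))
    (decay : ∀ x ∈ Icc a b, ∀ y ∈ Icc a b, x ≤ y → μ * (y - x) ≤ g x - g y) :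
    ∃ c ∈ Icc a b, ∀ ξ ∈ Icc a b, μ * |ξ - c| ≤ |g ξ| := by
  have a_mem : a ∈ Icc a b := left_mem_Icc.2 hab
  have b_mem : b ∈ Icc a b := right_mem_Icc.2 hab
  rcases le_or_gt (g a) 0 with ha | ha
  · refine ⟨a, a_mem, fun ξ hξ ↦ ?_⟩
    rw [abs_of_nonneg (sub_nonneg.2 hξ.1)]
    linarith [decay a a_mem ξ hξ hξ.1, neg_le_abs (g ξ)]
  rcases le_or_gt 0 (g b) with hb | hb
  · refine ⟨b, b_mem, fun ξ hξ ↦ ?_⟩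
    rw [abs_of_nonpos (sub_nonpos.2 hξ.2)]
    linarith [decay ξ hξ b b_mem hξ.2, le_abs_self (g ξ)]
  obtain ⟨c, hc, gc⟩ := intermediate_value_Icc' hab hg ⟨hb.le, ha.le⟩
  refine ⟨c, hc, fun ξ hξ ↦ ?_⟩
  rcases le_total ξ c with h | h
  · rw [abs_of_nonpos (sub_nonpos.2 h)]
    linarith [decay ξ hξ c hc h, le_abs_self (g ξ)]
  · rw [abs_of_nonneg (sub_nonneg.2 h)]
    linarith [decay c hc ξ hξ h, neg_le_abs (g ξ)]

theorem norm_oscIntegral_one_le_of_far {c δ A : ℝ} (hφ : ContinuousOn φ (Icc a b))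
    (hc : c ∈ Icc a b) (hδ : 0 ≤ δ) (hA : 0 ≤ A)
    (far : ∀ u v, u ≤ v → Icc u v ⊆ Icc a b → (∀ ξ ∈ Icc u v, δ ≤ |ξ - c|) →
      ‖oscIntegral φ 1 u v‖ ≤ A) :
    ‖oscIntegral φ 1 a b‖ ≤ 2 * A + 2 * δ := by
  set u := max a (c - δ) with hu
  set v := min b (c + δ) with hv
  have huc : u ≤ c := max_le hc.1 (by linarith)
  have hcv : c ≤ v := le_min hc.2 (by linarith)
  have hv_mem : v ∈ Icc a b := ⟨hc.1.trans hcv, min_le_left _ _⟩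
  have left : ‖oscIntegral φ 1 a u‖ ≤ A := by
    rcases le_total (c - δ) a with h | h
    · rwa [hu, max_eq_left h, oscIntegral, intervalIntegral.integral_same, norm_zero]
    · refine far a u (le_max_left _ _) (Icc_subset_Icc_right (huc.trans hc.2)) fun ξ hξ ↦ ?_
      rw [hu, max_eq_right h] at hξ
      linarith [hξ.2, neg_le_abs (ξ - c)]
  have right : ‖oscIntegral φ 1 v b‖ ≤ A := by
    rcases le_total b (c + δ) with h | h
    · rwa [hv, min_eq_left h, oscIntegral, intervalIntegral.integral_same, norm_zero]
    · refine far v b hv_mem.2 (Icc_subset_Icc_left hv_mem.1) fun ξ hξ ↦ ?_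
      rw [hv, min_eq_right h] at hξ
      linarith [hξ.1, le_abs_self (ξ - c)]
  have near : ‖oscIntegral φ 1 u v‖ ≤ 2 * δ := by
    refine (norm_oscIntegral_le (huc.trans hcv)).trans ?_
    simp only [Pi.one_apply, abs_one, intervalIntegral.integral_const, smul_eq_mul, mul_one]
    linarith [le_max_right a (c - δ), min_le_right b (c + δ)]
  rw [← oscIntegral_add_adjacent hφ continuous_one.continuousOn hv_mem,
    ← oscIntegral_add_adjacent (hφ.mono (Icc_subset_Icc_right hv_mem.2))
      continuous_one.continuousOn ⟨le_max_left _ _, huc.trans hcv⟩]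
  exact (norm_add₃_le).trans (by linarith)

theorem norm_oscIntegral_one_le_of_deriv2_le {μ : ℝ} (hμ : 0 < μ) (hab : a ≤ b)
    (hφ : ∀ ξ ∈ Icc a b, HasDerivAt φ (φ' ξ) ξ) (hφ' : ∀ ξ ∈ Icc a b, HasDerivAt φ' (φ'' ξ) ξ)
    (hφ'' : ContinuousOn φ'' (Icc a b)) (φ''_le : ∀ ξ ∈ Icc a b, φ'' ξ ≤ -μ) :
    ‖oscIntegral φ 1 a b‖ ≤ 10 / √μ := by
  have decay : AntitoneOn (fun ξ ↦ φ' ξ + μ * ξ) (Icc a b) := by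
    refine antitoneOn_of_hasDerivWithinAt_nonpos (f' := fun ξ ↦ φ'' ξ + μ * 1) (convex_Icc a b)
      ((HasDerivAt.continuousOn hφ').add (by fun_prop)) (fun ξ hξ ↦ ?_) fun ξ hξ ↦ ?_
    · exact ((hφ' ξ (interior_subset hξ)).add ((hasDerivAt_id ξ).const_mul μ)).hasDerivWithinAt
    · linarith [φ''_le ξ (interior_subset hξ)]
  obtain ⟨c, hc, c_le⟩ := exists_mul_abs_sub_le_abs (μ := μ) hab (HasDerivAt.continuousOn hφ')
    fun x hx y hy hxy ↦ by linarith [decay hx hy hxy]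
  have hsqrt : 0 < √μ := Real.sqrt_pos.2 hμ
  have far (u v) (huv : u ≤ v) (hsub : Icc u v ⊆ Icc a b)
      (hc : ∀ ξ ∈ Icc u v, 1 / √μ ≤ |ξ - c|) : ‖oscIntegral φ 1 u v‖ ≤ 4 / √μ := by
    refine norm_oscIntegral_one_le_of_le_abs_deriv huv (fun ξ hξ ↦ hφ ξ (hsub hξ))
      (fun ξ hξ ↦ hφ' ξ (hsub hξ)) (hφ''.mono hsub)
      (fun ξ hξ ↦ (φ''_le ξ (hsub hξ)).trans (neg_nonpos.2 hμ.le)) hsqrt fun ξ hξ ↦ ?_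
    calc √μ = μ * (1 / √μ) := by rw [mul_one_div, Real.div_sqrt]
      _ ≤ μ * |ξ - c| := by gcongr; exact hc ξ hξ
      _ ≤ |φ' ξ| := c_le ξ (hsub hξ)
  calc ‖oscIntegral φ 1 a b‖ ≤ 2 * (4 / √μ) + 2 * (1 / √μ) :=
        norm_oscIntegral_one_le_of_far (HasDerivAt.continuousOn hφ) hc (by positivity)
          (by positivity) far
    _ = 10 / √μ := by ring

theorem norm_oscIntegral_le_of_deriv2_le {μ : ℝ} (hμ : 0 < μ) (hab : a ≤ b)
    (hφ : ∀ ξ ∈ Icc a b, HasDerivAt φ (φ' ξ) ξ) (hφ' : ∀ ξ ∈ Icc a b, HasDerivAt φ' (φ'' ξ) ξ)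
    (hφ'' : ContinuousOn φ'' (Icc a b)) (φ''_le : ∀ ξ ∈ Icc a b, φ'' ξ ≤ -μ)
    (hf : ∀ ξ ∈ Icc a b, HasDerivAt f (f' ξ) ξ) (hf' : ContinuousOn f' (Icc a b))
    (f'_nonpos : ∀ ξ ∈ Icc a b, f' ξ ≤ 0) (f_nonneg : 0 ≤ f b) :
    ‖oscIntegral φ f a b‖ ≤ 10 / √μ * f a := by
  have hφc : ContinuousOn φ (Icc a b) := HasDerivAt.continuousOn hφ
  refine norm_integral_antitone_smul_le hab hf hf' f'_nonpos f_nonneg (by fun_prop)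
    fun u hu ↦ ?_
  have hsub : Icc a u ⊆ Icc a b := Icc_subset_Icc_right hu.2
  simpa only [oscIntegral, Pi.one_apply, one_smul] using
    norm_oscIntegral_one_le_of_deriv2_le hμ hu.1 (fun ξ hξ ↦ hφ ξ (hsub hξ))
      (fun ξ hξ ↦ hφ' ξ (hsub hξ)) (hφ''.mono hsub) fun ξ hξ ↦ φ''_le ξ (hsub hξ)

end OscillatoryIntegral

section BesselWeight

/-- The Bessel weight `⟨ξ⟩^{-2s}`. -/
noncomputable def besselWeight (s ξ : ℝ) : ℝ := (1 + ξ ^ 2) ^ (-s)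

variable {s ξ : ℝ}

theorem besselWeight_pos : 0 < besselWeight s ξ := Real.rpow_pos_of_pos (by positivity) _

theorem besselWeight_neg : besselWeight s (-ξ) = besselWeight s ξ := by
  rw [besselWeight, neg_sq, besselWeight]

theorem one_add_sq_mul_besselWeight_add_one :
    (1 + ξ ^ 2) * besselWeight (s + 1) ξ = besselWeight s ξ := by
  rw [besselWeight, neg_add, Real.rpow_add (by positivity), Real.rpow_neg_one, mul_left_comm,
    mul_inv_cancel₀ (by positivity), mul_one, besselWeight]

theorem besselWeight_mul_besselWeight {r : ℝ} :
    besselWeight r ξ * besselWeight s ξ = besselWeight (r + s) ξ := by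
  rw [besselWeight, besselWeight, ← Real.rpow_add (by positivity), ← neg_add, besselWeight]

theorem besselWeight_le_one (hs : 0 ≤ s) : besselWeight s ξ ≤ 1 :=
  Real.rpow_le_one_of_one_le_of_nonpos (by nlinarith) (by linarith)

theorem besselWeight_le_rpow (hs : 0 ≤ s) {x : ℝ} (hx : 0 < x) (hξ : x ≤ ξ ^ 2) :
    besselWeight s ξ ≤ x ^ (-s) :=
  Real.rpow_le_rpow_of_nonpos hx (by linarith) (by linarith)

theorem hasDerivAt_besselWeight (s ξ : ℝ) :
    HasDerivAt (besselWeight s) (-(2 * s) * (ξ * besselWeight (s + 1) ξ)) ξ := by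
  have h : HasDerivAt (fun ξ : ℝ ↦ 1 + ξ ^ 2) (2 * ξ) ξ := by
    simpa using (hasDerivAt_pow 2 ξ).const_add 1
  refine (h.rpow_const (p := -s) (Or.inl (by positivity))).congr_deriv ?_
  rw [besselWeight, neg_add']
  ring

theorem hasDerivAt_mul_besselWeight (s ξ : ℝ) :
    HasDerivAt (fun ξ ↦ ξ * besselWeight s ξ)
      (besselWeight s ξ - 2 * s * (ξ ^ 2 * besselWeight (s + 1) ξ)) ξ :=
  ((hasDerivAt_id ξ).mul (hasDerivAt_besselWeight s ξ)).congr_deriv (by simp only [id]; ring)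

@[fun_prop]
theorem continuous_besselWeight (s : ℝ) : Continuous (besselWeight s) :=
  continuous_iff_continuousAt.2 fun ξ ↦ (hasDerivAt_besselWeight s ξ).continuousAt

theorem continuous_deriv_besselWeight (s : ℝ) :
    Continuous fun ξ ↦ -(2 * s) * (ξ * besselWeight (s + 1) ξ) := by
  fun_prop

theorem continuous_deriv2_besselWeight (s : ℝ) : Continuous fun ξ ↦
    -(2 * s) * (besselWeight (s + 1) ξ - 2 * (s + 1) * (ξ ^ 2 * besselWeight (s + 1 + 1) ξ)) := by
  fun_prop

theorem integral_besselWeight_nonneg : 0 ≤ ∫ ξ, besselWeight s ξ :=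
  integral_nonneg fun _ ↦ besselWeight_pos.le

theorem integrable_besselWeight (hs : 1 / 2 < s) : Integrable (besselWeight s) := by
  have h := integrable_rpow_neg_one_add_norm_sq (E := ℝ) (μ := volume) (r := 2 * s)
    (by rw [Module.finrank_self]; push_cast; linarith)
  simp only [Real.norm_eq_abs, sq_abs, neg_div, mul_div_cancel_left₀ s (two_ne_zero' ℝ)] at h
  exact h

theorem intervalIntegral_besselWeight_le {a b : ℝ} (hs : 1 / 2 < s) (hab : a ≤ b) :
    ∫ ξ in a..b, besselWeight s ξ ≤ ∫ ξ, besselWeight s ξ := by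
  rw [intervalIntegral.integral_of_le hab]
  exact setIntegral_le_integral (integrable_besselWeight hs)
    (.of_forall fun _ ↦ besselWeight_pos.le)

theorem abs_mul_besselWeight_add_one_le : |ξ * besselWeight (s + 1) ξ| ≤ besselWeight s ξ / 2 := by
  rw [abs_mul, abs_of_pos besselWeight_pos, ← one_add_sq_mul_besselWeight_add_one (s := s)]
  nlinarith [besselWeight_pos (s := s + 1) (ξ := ξ), sq_nonneg (|ξ| - 1), sq_abs ξ]

theorem abs_deriv_besselWeight_le (h0 : 0 ≤ s) (h1 : s ≤ 1) :
    |-(2 * s) * (ξ * besselWeight (s + 1) ξ)| ≤ besselWeight s ξ := by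
  rw [abs_mul, abs_neg, abs_of_nonneg (by positivity)]
  nlinarith [abs_mul_besselWeight_add_one_le (s := s) (ξ := ξ), besselWeight_pos (s := s) (ξ := ξ)]

theorem abs_deriv2_besselWeight_le (h0 : 0 ≤ s) (h1 : s ≤ 1) :
    |-(2 * s) * (besselWeight (s + 1) ξ - 2 * (s + 1) * (ξ ^ 2 * besselWeight (s + 1 + 1) ξ))| ≤
      6 * besselWeight s ξ := by
  have hw : 0 < besselWeight (s + 1 + 1) ξ := besselWeight_pos
  have hv := one_add_sq_mul_besselWeight_add_one (s := s + 1) (ξ := ξ)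
  have hvs := one_add_sq_mul_besselWeight_add_one (s := s) (ξ := ξ)
  set v := besselWeight (s + 1) ξ
  set y := ξ ^ 2 * besselWeight (s + 1 + 1) ξ
  have hy : 0 ≤ y := by positivity
  have v_le : v ≤ besselWeight s ξ := by nlinarith [sq_nonneg ξ]
  have abs_le : |v - 2 * (s + 1) * y| ≤ 3 * v := by
    have y_le : y ≤ v := by linarith
    exact abs_le.2 ⟨by nlinarith [y_le], by nlinarith [y_le]⟩
  rw [abs_mul, abs_neg, abs_of_nonneg (by positivity)]
  nlinarith

end BesselWeight

section AiryKernel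

open Set

/-- The phase `xξ + tξ³` of the Airy group. -/
def airyPhase (x t ξ : ℝ) : ℝ := x * ξ + t * ξ ^ 3

variable {s x t b ξ : ℝ}

theorem airyPhase_mul_I :
    airyPhase x t ξ * Complex.I = Complex.I * ((x : ℂ) * ξ + (t : ℂ) * (ξ : ℂ) ^ 3) := by
  rw [airyPhase]
  push_cast
  ring

theorem airyPhase_neg : airyPhase x t (-ξ) = -airyPhase x t ξ := by
  rw [airyPhase, airyPhase]; ring

theorem airyPhase_sub {y r : ℝ} :
    airyPhase (x - y) (t - r) ξ = airyPhase x t ξ - airyPhase y r ξ := by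
  simp only [airyPhase]; ring

theorem hasDerivAt_airyPhase (x t ξ : ℝ) :
    HasDerivAt (airyPhase x t) (x + 3 * t * ξ ^ 2) ξ :=
  (((hasDerivAt_id ξ).const_mul x).add ((hasDerivAt_pow 3 ξ).const_mul t)).congr_deriv
    (by push_cast; ring)

theorem hasDerivAt_deriv_airyPhase (x t ξ : ℝ) :
    HasDerivAt (fun ξ ↦ x + 3 * t * ξ ^ 2) (6 * t * ξ) ξ :=
  (((hasDerivAt_pow 2 ξ).const_mul (3 * t)).const_add x).congr_deriv (by push_cast; ring)

theorem half_le_deriv_airyPhase (hx : 0 ≤ x) (hb : x / 2 ≤ x + 3 * t * b ^ 2) (hξ : |ξ| ≤ b) :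
    x / 2 ≤ x + 3 * t * ξ ^ 2 := by
  have hsq : ξ ^ 2 ≤ b ^ 2 := sq_le_sq' (abs_le.1 hξ).1 (abs_le.1 hξ).2
  rcases le_total 0 t with ht | ht
  · nlinarith [mul_nonneg ht (sq_nonneg ξ)]
  · nlinarith [mul_nonneg (neg_nonneg.2 ht) (sub_nonneg.2 hsq)]

theorem abs_deriv2_airyPhase_le (hx : 1 ≤ x) (ht : |t| ≤ 2) (h : x / 2 ≤ x + 3 * t * ξ ^ 2) :
    |6 * t * ξ| ≤ 13 * (x + 3 * t * ξ ^ 2) := by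
  have two_abs_le : 2 * |ξ| ≤ 1 + ξ ^ 2 := by nlinarith [sq_nonneg (|ξ| - 1), sq_abs ξ]
  calc |6 * t * ξ| = 3 * |t| * (2 * |ξ|) := by
        rw [abs_mul, abs_mul, abs_of_pos (by norm_num : (0 : ℝ) < 6)]; ring
    _ ≤ 3 * |t| * (1 + ξ ^ 2) := by gcongr
    _ ≤ 13 * (x + 3 * t * ξ ^ 2) := by
      rcases abs_cases t with ⟨ht', h0⟩ | ⟨ht', h0⟩ <;> rw [ht'] at ht ⊢
      · nlinarith [mul_nonneg h0 (sq_nonneg ξ)]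
      · nlinarith

theorem norm_oscIntegral_airyPhase_central_le (h0 : 1 / 2 < s) (h1 : s ≤ 1) (hx : 1 ≤ x)
    (ht : |t| ≤ 2) (hb : 0 ≤ b) (hxb : x / 2 ≤ x + 3 * t * b ^ 2) :
    ‖oscIntegral (airyPhase x t) (besselWeight s) (-b) b‖ ≤
      10 ^ 8 * (besselWeight s b / x + (2 + ∫ ξ, besselWeight s ξ) / x ^ 2) := by
  have hs : 0 ≤ s := by linarith
  have hx0 : 0 ≤ x := by linarith
  have half_le (ξ) (hξ : ξ ∈ Icc (-b) b) : x / 2 ≤ x + 3 * t * ξ ^ 2 :=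
    half_le_deriv_airyPhase hx0 hxb (abs_le.2 hξ)
  have weight_pos (ξ : ℝ) : 0 < besselWeight s ξ := besselWeight_pos
  have W_nonneg : 0 ≤ ∫ ξ, besselWeight s ξ := integral_besselWeight_nonneg
  have bound := norm_oscIntegral_le_of_abs_deriv_le_mul_deriv (M := 24) (l := x / 2)
    (φ''' := fun _ ↦ 6 * t) (by linarith : -b ≤ b)
    (fun ξ _ ↦ hasDerivAt_airyPhase x t ξ) (fun ξ _ ↦ hasDerivAt_deriv_airyPhase x t ξ)
    (fun ξ _ ↦ by simpa using (hasDerivAt_id ξ).const_mul (6 * t)) continuousOn_const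
    (fun ξ _ ↦ hasDerivAt_besselWeight s ξ)
    (fun ξ _ ↦ (hasDerivAt_mul_besselWeight (s + 1) ξ).const_mul (-(2 * s)))
    (continuous_deriv2_besselWeight s).continuousOn
    (fun ξ _ ↦ besselWeight_pos.le) (by linarith) half_le
    (fun ξ hξ ↦ (abs_deriv2_airyPhase_le hx ht (half_le ξ hξ)).trans (by linarith [half_le ξ hξ]))
    (fun ξ hξ ↦ by
      rw [abs_mul, abs_of_pos (by norm_num : (0 : ℝ) < 6)]
      linarith [half_le ξ hξ])
    (fun ξ _ ↦ (abs_deriv_besselWeight_le hs h1).trans (by linarith [weight_pos ξ]))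
    (fun ξ _ ↦ (abs_deriv2_besselWeight_le hs h1).trans (by linarith [weight_pos ξ]))
  have integral_le : ∫ ξ in -b..b, besselWeight s ξ ≤ ∫ ξ, besselWeight s ξ :=
    intervalIntegral_besselWeight_le h0 (by linarith)
  rw [besselWeight_neg] at bound
  calc ‖oscIntegral (airyPhase x t) (besselWeight s) (-b) b‖ ≤ _ := bound
    _ ≤ (x / 2)⁻¹ * (besselWeight s b + besselWeight s b) +
        (4 * (24 + 2 * 24 ^ 2) ^ 2 + 2 * (24 + 2 * 24 ^ 2)) * (x / 2)⁻¹ ^ 2 *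
          (1 + 1 + ∫ ξ, besselWeight s ξ) := by
        gcongr <;> exact besselWeight_le_one hs
    _ = 4 * (besselWeight s b / x) + 22137024 * ((2 + ∫ ξ, besselWeight s ξ) / x ^ 2) := by
        field_simp; ring
    _ ≤ 10 ^ 8 * (besselWeight s b / x + (2 + ∫ ξ, besselWeight s ξ) / x ^ 2) := by
        have weight_nonneg : 0 ≤ besselWeight s b / x := div_nonneg besselWeight_pos.le hx0
        have const_nonneg : 0 ≤ (2 + ∫ ξ, besselWeight s ξ) / x ^ 2 :=
          div_nonneg (by linarith) (sq_nonneg x)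
        linarith

theorem rpow_neg_le_pow_mul_rpow_neg {x y r c : ℝ} {n : ℕ} (h0 : 0 ≤ r) (hr : r ≤ n)
    (hc : 1 ≤ c) (hx : 0 < x) (hy : x ≤ c * y) : y ^ (-r) ≤ c ^ n * x ^ (-r) := by
  have hc0 : 0 < c := by linarith
  calc y ^ (-r) ≤ (x / c) ^ (-r) :=
        Real.rpow_le_rpow_of_nonpos (by positivity) ((div_le_iff₀' hc0).2 hy) (by linarith)
    _ = c ^ r * x ^ (-r) := by
        rw [Real.div_rpow hx.le hc0.le, Real.rpow_neg hc0.le, div_inv_eq_mul, mul_comm]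
    _ ≤ c ^ n * x ^ (-r) := by
        gcongr
        exact (Real.rpow_le_rpow_of_exponent_le hc hr).trans_eq (Real.rpow_natCast c n)

theorem rpow_neg_le_twelve_mul_rpow_neg {x y r : ℝ} (h0 : 0 ≤ r) (h1 : r ≤ 1) (hx : 0 < x)
    (hy : x ≤ 12 * y) : y ^ (-r) ≤ 12 * x ^ (-r) := by
  simpa using rpow_neg_le_pow_mul_rpow_neg (n := 1) h0 (by simpa using h1) (by norm_num) hx hy

theorem norm_oscIntegral_airyPhase_central_le_rpow (h0 : 1 / 2 < s) (h1 : s ≤ 1) (hx : 1 ≤ x)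
    (ht : |t| ≤ 2) (hb : 0 ≤ b) (hxb : x / 2 ≤ x + 3 * t * b ^ 2) (hbx : x ≤ 12 * b ^ 2) :
    ‖oscIntegral (airyPhase x t) (besselWeight s) (-b) b‖ ≤
      10 ^ 8 * (14 + ∫ ξ, besselWeight s ξ) * x ^ (-(s + 1 / 4)) := by
  have hx0 : 0 < x := by linarith
  have hb0 : 0 < b ^ 2 := by linarith
  have weight_div_le : besselWeight s b / x ≤ 12 * x ^ (-(s + 1 / 4)) := by
    calc besselWeight s b / x ≤ 12 * x ^ (-s) / x := by
          gcongr
          exact (besselWeight_le_rpow (by linarith) hb0 le_rfl).trans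
            (rpow_neg_le_twelve_mul_rpow_neg (by linarith) h1 hx0 hbx)
      _ = 12 * x ^ (-s - 1) := by rw [mul_div_assoc, Real.rpow_sub_one hx0.ne']
      _ ≤ 12 * x ^ (-(s + 1 / 4)) := by
          gcongr 12 * ?_
          exact Real.rpow_le_rpow_of_exponent_le hx (by linarith)
  have inv_sq_le : (x ^ 2)⁻¹ ≤ x ^ (-(s + 1 / 4)) := by
    rw [← Real.rpow_natCast, ← Real.rpow_neg hx0.le]
    exact Real.rpow_le_rpow_of_exponent_le hx (by push_cast; linarith)
  calc ‖oscIntegral (airyPhase x t) (besselWeight s) (-b) b‖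
      ≤ 10 ^ 8 * (besselWeight s b / x + (2 + ∫ ξ, besselWeight s ξ) * (x ^ 2)⁻¹) :=
        norm_oscIntegral_airyPhase_central_le h0 h1 hx ht hb hxb
    _ ≤ 10 ^ 8 * (12 * x ^ (-(s + 1 / 4)) +
        (2 + ∫ ξ, besselWeight s ξ) * x ^ (-(s + 1 / 4))) := by
        have W_nonneg : 0 ≤ ∫ ξ, besselWeight s ξ := integral_besselWeight_nonneg
        gcongr
    _ = 10 ^ 8 * (14 + ∫ ξ, besselWeight s ξ) * x ^ (-(s + 1 / 4)) := by ring

theorem sqrt_div_mul_rpow_le (h0 : 1 / 4 ≤ s) (h1 : s ≤ 1) (hx : 0 < x) (hb : 0 < b)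
    (hbx : x ≤ 12 * b ^ 2) : √(b / x) * (b ^ 2) ^ (-s) ≤ 12 * x ^ (-(s + 1 / 4)) := by
  have sqrt_eq : √b = (b ^ 2) ^ (1 / 4 : ℝ) := by
    rw [Real.sqrt_eq_rpow, ← Real.rpow_natCast, ← Real.rpow_mul hb.le]
    norm_num
  calc √(b / x) * (b ^ 2) ^ (-s) = (b ^ 2) ^ (-(s - 1 / 4)) * x ^ (-(1 / 2) : ℝ) := by
        rw [Real.sqrt_div hb.le, sqrt_eq, Real.rpow_neg hx.le, ← Real.sqrt_eq_rpow, neg_sub',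
          sub_neg_eq_add, Real.rpow_add (by positivity)]
        ring
    _ ≤ 12 * x ^ (-(s - 1 / 4)) * x ^ (-(1 / 2) : ℝ) := by
        gcongr
        exact rpow_neg_le_twelve_mul_rpow_neg (by linarith) (by linarith) hx hbx
    _ = 12 * x ^ (-(s + 1 / 4)) := by
        rw [mul_assoc, ← Real.rpow_add hx]
        ring_nf

theorem norm_oscIntegral_airyPhase_outer_le {B : ℝ} (h0 : 1 / 4 ≤ s) (h1 : s ≤ 1) (hx : 0 < x)
    (hb : 0 < b) (hbB : b ≤ B) (htb : -(6 * t) * b ^ 2 = x) (hbx : x ≤ 12 * b ^ 2) :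
    ‖oscIntegral (airyPhase x t) (besselWeight s) b B‖ ≤ 120 * x ^ (-(s + 1 / 4)) := by
  have hs : 0 ≤ s := by linarith
  have t_nonpos : t ≤ 0 := by nlinarith [pow_pos hb 2]
  have μ_eq : -(6 * t) * b = x / b := by rw [← htb]; field_simp
  have μ_pos : 0 < x / b := by positivity
  have vdc := norm_oscIntegral_le_of_deriv2_le μ_pos hbB
    (fun ξ _ ↦ hasDerivAt_airyPhase x t ξ) (fun ξ _ ↦ hasDerivAt_deriv_airyPhase x t ξ)
    (by fun_prop) (fun ξ hξ ↦ by rw [← μ_eq]; nlinarith [t_nonpos, hξ.1])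
    (fun ξ _ ↦ hasDerivAt_besselWeight s ξ)
    (continuous_deriv_besselWeight s).continuousOn
    (fun ξ hξ ↦ mul_nonpos_of_nonpos_of_nonneg (by linarith)
      (mul_nonneg (hb.le.trans hξ.1) besselWeight_pos.le)) besselWeight_pos.le
  calc ‖oscIntegral (airyPhase x t) (besselWeight s) b B‖
      ≤ 10 / √(x / b) * besselWeight s b := vdc
    _ ≤ 10 / √(x / b) * (b ^ 2) ^ (-s) := by
        gcongr
        exact besselWeight_le_rpow hs (by positivity) le_rfl
    _ = 10 * (√(b / x) * (b ^ 2) ^ (-s)) := by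
        rw [← inv_div b x, Real.sqrt_inv, div_inv_eq_mul, mul_assoc]
    _ ≤ 10 * (12 * x ^ (-(s + 1 / 4))) := by
        gcongr 10 * ?_
        exact sqrt_div_mul_rpow_le h0 h1 hx hb hbx
    _ = 120 * x ^ (-(s + 1 / 4)) := by ring

theorem norm_oscIntegral_airyPhase_neg_self_le {B : ℝ} (hb : 0 ≤ b) (hbB : b ≤ B) :
    ‖oscIntegral (airyPhase x t) (besselWeight s) (-B) B‖ ≤
      ‖oscIntegral (airyPhase x t) (besselWeight s) (-b) b‖ +
        2 * ‖oscIntegral (airyPhase x t) (besselWeight s) b B‖ := by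
  have phase_cont (u : Set ℝ) : ContinuousOn (airyPhase x t) u := fun ξ _ ↦
    (hasDerivAt_airyPhase x t ξ).continuousAt.continuousWithinAt
  have weight_cont (u : Set ℝ) : ContinuousOn (besselWeight s) u := by fun_prop
  have left_eq : ‖oscIntegral (airyPhase x t) (besselWeight s) (-B) (-b)‖ =
      ‖oscIntegral (airyPhase x t) (besselWeight s) b B‖ :=
    norm_oscIntegral_neg_neg (fun _ ↦ airyPhase_neg) fun _ ↦ besselWeight_neg
  rw [← oscIntegral_add_adjacent (phase_cont _) (weight_cont _)
      (⟨by linarith, hbB⟩ : b ∈ Icc (-B) B),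
    ← oscIntegral_add_adjacent (phase_cont _) (weight_cont _)
      (⟨by linarith, by linarith⟩ : -b ∈ Icc (-B) b)]
  calc _ ≤ _ := norm_add₃_le
    _ = _ := by rw [left_eq]; ring

/-- The constant of the decay estimate for the truncated Airy kernels. -/
noncomputable def airyDecayConst (s : ℝ) : ℝ := 10 ^ 8 * (14 + ∫ ξ, besselWeight s ξ) + 240

theorem norm_oscIntegral_airyPhase_le {B : ℝ} (h0 : 1 / 2 < s) (h1 : s ≤ 1) (hx : 1 ≤ x)
    (ht : |t| ≤ 2) (hB : 0 ≤ B) (hxB : x ≤ 12 * B ^ 2) :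
    ‖oscIntegral (airyPhase x t) (besselWeight s) (-B) B‖ ≤
      airyDecayConst s * x ^ (-(s + 1 / 4)) := by
  have hx0 : 0 < x := by linarith
  have rpow_nonneg : 0 ≤ x ^ (-(s + 1 / 4)) := by positivity
  rw [airyDecayConst, add_mul]
  by_cases hxB' : x / 2 ≤ x + 3 * t * B ^ 2
  · linarith [norm_oscIntegral_airyPhase_central_le_rpow h0 h1 hx ht hB hxB' hxB]
  have ht0 : t < 0 := by nlinarith [sq_nonneg B]
  -- At `b` the first derivative of the phase has dropped to half of its value at the origin.
  set b := √(x / -(6 * t))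
  have hb : 0 < b := Real.sqrt_pos.2 (div_pos hx0 (by linarith))
  have htb : -(6 * t) * b ^ 2 = x := by
    rw [Real.sq_sqrt (div_pos hx0 (by linarith)).le, mul_div_cancel₀ _ (by linarith)]
  have hbx : x ≤ 12 * b ^ 2 := by nlinarith [abs_le.1 ht, pow_pos hb 2]
  have hbB : b ≤ B := by
    refine le_of_sq_le_sq ?_ hB
    nlinarith
  linarith [norm_oscIntegral_airyPhase_neg_self_le (s := s) (x := x) (t := t) hb.le hbB,
    norm_oscIntegral_airyPhase_central_le_rpow h0 h1 hx ht hb.le (by linarith) hbx,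
    norm_oscIntegral_airyPhase_outer_le (by linarith) h1 hx0 hb hbB htb hbx]

/-- The kernel `∫ ⟨ξ⟩^{-2s} e^{i(xξ + tξ³)} dξ` of the smoothed Airy group. -/
noncomputable def airyKernel (s x t : ℝ) : ℂ :=
  ∫ ξ, besselWeight s ξ • Complex.exp (airyPhase x t ξ * Complex.I)

theorem norm_besselWeight_smul_exp {θ : ℝ} :
    ‖besselWeight s ξ • Complex.exp (θ * Complex.I)‖ = besselWeight s ξ := by
  rw [norm_smul, Complex.norm_exp_ofReal_mul_I, mul_one, Real.norm_of_nonneg besselWeight_pos.le]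

theorem airyKernel_neg_neg : airyKernel s (-x) (-t) = airyKernel s x t := by
  rw [airyKernel, ← integral_neg_eq_self, airyKernel]
  simp only [besselWeight_neg, airyPhase, neg_mul_neg, Odd.neg_pow (by decide : Odd 3)]

theorem norm_airyKernel_le : ‖airyKernel s x t‖ ≤ ∫ ξ, besselWeight s ξ :=
  (norm_integral_le_integral_norm _).trans_eq (by simp only [norm_besselWeight_smul_exp])

@[fun_prop]
theorem continuous_airyPhase_uncurry :
    Continuous fun q : (ℝ × ℝ) × ℝ ↦ airyPhase q.1.1 q.1.2 q.2 := by
  unfold airyPhase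
  fun_prop

theorem continuous_airyPhase : Continuous (airyPhase x t) :=
  continuous_airyPhase_uncurry.comp (Continuous.prodMk_right (x, t))

theorem integrable_besselWeight_smul_exp (hs : 1 / 2 < s) :
    Integrable fun ξ ↦ besselWeight s ξ • Complex.exp (airyPhase x t ξ * Complex.I) := by
  refine (integrable_besselWeight hs).mono' ?_ (.of_forall fun ξ ↦ norm_besselWeight_smul_exp.le)
  have := continuous_airyPhase (x := x) (t := t)
  exact Continuous.aestronglyMeasurable (by fun_prop)

theorem norm_airyKernel_le_of_one_le (h0 : 1 / 2 < s) (h1 : s ≤ 1) (hx : 1 ≤ x) (ht : |t| ≤ 2) :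
    ‖airyKernel s x t‖ ≤ airyDecayConst s * x ^ (-(s + 1 / 4)) := by
  have truncated_tendsto : Filter.Tendsto
      (fun B ↦ oscIntegral (airyPhase x t) (besselWeight s) (-B) B) Filter.atTop
      (nhds (airyKernel s x t)) :=
    intervalIntegral_tendsto_integral (integrable_besselWeight_smul_exp h0)
      Filter.tendsto_neg_atTop_atBot Filter.tendsto_id
  refine le_of_tendsto truncated_tendsto.norm ?_
  filter_upwards [Filter.eventually_ge_atTop x] with B hB
  exact norm_oscIntegral_airyPhase_le h0 h1 hx ht (by linarith) (by nlinarith)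

theorem norm_airyKernel_le_one_add_abs (h0 : 1 / 2 < s) (h1 : s ≤ 1) (ht : |t| ≤ 2) :
    ‖airyKernel s x t‖ ≤ 4 * airyDecayConst s * (1 + |x|) ^ (-(s + 1 / 4)) := by
  have W_nonneg : 0 ≤ ∫ ξ, besselWeight s ξ := integral_besselWeight_nonneg
  have const_nonneg : 0 ≤ airyDecayConst s := by rw [airyDecayConst]; positivity
  have rpow_le {y : ℝ} (hy : 1 + |x| ≤ 2 * y) :
      y ^ (-(s + 1 / 4)) ≤ 2 ^ 2 * (1 + |x|) ^ (-(s + 1 / 4)) :=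
    rpow_neg_le_pow_mul_rpow_neg (by linarith) (by push_cast; linarith) (by norm_num)
      (by positivity) hy
  calc ‖airyKernel s x t‖ ≤ airyDecayConst s * (max 1 |x|) ^ (-(s + 1 / 4)) := by
        rcases le_total |x| 1 with hx | hx
        · rw [max_eq_left hx, Real.one_rpow, mul_one, airyDecayConst]
          linarith [norm_airyKernel_le (s := s) (x := x) (t := t)]
        rw [max_eq_right hx]
        rcases abs_cases x with ⟨abs_eq, -⟩ | ⟨abs_eq, -⟩ <;> rw [abs_eq] at hx ⊢
        · exact norm_airyKernel_le_of_one_le h0 h1 hx ht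
        · rw [← airyKernel_neg_neg]
          exact norm_airyKernel_le_of_one_le h0 h1 hx (by rwa [abs_neg])
    _ ≤ airyDecayConst s * (2 ^ 2 * (1 + |x|) ^ (-(s + 1 / 4))) := by
        gcongr
        exact rpow_le (by linarith [le_max_left 1 |x|, le_max_right 1 |x|])
    _ = 4 * airyDecayConst s * (1 + |x|) ^ (-(s + 1 / 4)) := by ring

end AiryKernel

section AiryVector

theorem continuous_of_continuous_inner {𝕜 H P : Type*} [RCLike 𝕜] [NormedAddCommGroup H]
    [InnerProductSpace 𝕜 H] [TopologicalSpace P] {v : P → H}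
    (hv : Continuous fun q : P × P ↦ inner 𝕜 (v q.1) (v q.2)) : Continuous v := by
  refine continuous_iff_continuousAt.2 fun p ↦ tendsto_iff_norm_sub_tendsto_zero.2 ?_
  have norm_sq_eq (q : P) : ‖v q - v p‖ ^ 2 = RCLike.re (inner 𝕜 (v q) (v q)) -
      2 * RCLike.re (inner 𝕜 (v q) (v p)) + RCLike.re (inner 𝕜 (v p) (v p)) := by
    simp only [norm_sub_sq (𝕜 := 𝕜), norm_sq_eq_re_inner (𝕜 := 𝕜)]
  have re_inner_cont {f g : P → P} (hf : Continuous f) (hg : Continuous g) :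
      Continuous fun q ↦ RCLike.re (inner 𝕜 (v (f q)) (v (g q))) :=
    RCLike.continuous_re.comp (hv.comp (hf.prodMk hg))
  have norm_sq_cont : Continuous fun q ↦ ‖v q - v p‖ ^ 2 := by
    simp only [norm_sq_eq]
    exact ((re_inner_cont continuous_id continuous_id).sub
      ((re_inner_cont continuous_id continuous_const).const_mul 2)).add continuous_const
  simpa [Real.sqrt_sq] using (norm_sq_cont.tendsto p).sqrt

variable {s x t y r : ℝ}

theorem continuous_airyKernel (hs : 1 / 2 < s) :
    Continuous fun p : ℝ × ℝ ↦ airyKernel s p.1 p.2 := by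
  refine continuous_of_dominated
    (fun p ↦ (integrable_besselWeight_smul_exp hs).aestronglyMeasurable)
    (fun p ↦ .of_forall fun ξ ↦ norm_besselWeight_smul_exp.le) (integrable_besselWeight hs)
    (.of_forall fun ξ ↦ ?_)
  have : Continuous fun p : ℝ × ℝ ↦ airyPhase p.1 p.2 ξ :=
    continuous_airyPhase_uncurry.comp (Continuous.prodMk_left ξ)
  fun_prop

theorem memLp_besselWeight_smul_exp (hs : 1 / 2 < s) :
    MemLp (fun ξ ↦ besselWeight (s / 2) ξ •
      Complex.exp ((-airyPhase x t ξ : ℝ) * Complex.I)) 2 := by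
  have phase_cont := continuous_airyPhase (x := x) (t := t)
  rw [memLp_two_iff_integrable_sq_norm (Continuous.aestronglyMeasurable (by fun_prop))]
  refine (integrable_besselWeight hs).congr (.of_forall fun ξ ↦ ?_)
  dsimp only
  rw [norm_besselWeight_smul_exp, sq, besselWeight_mul_besselWeight, add_halves]

/-- The vector of `L²(ℝ)` representing evaluation of the Airy group at `(x, t)`: pairing it with
`⟨ξ⟩^s a(ξ)` gives `∫ e^{i(xξ + tξ³)} a(ξ) dξ`. -/
noncomputable def airyVector (hs : 1 / 2 < s) (x t : ℝ) : Lp ℂ 2 (volume : Measure ℝ) :=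
  (memLp_besselWeight_smul_exp (x := x) (t := t) hs).toLp

theorem inner_airyVector_toLp (hs : 1 / 2 < s) {f : ℝ → ℂ} (hf : MemLp f 2) :
    inner ℂ (airyVector hs x t) hf.toLp =
      ∫ ξ, besselWeight (s / 2) ξ • (Complex.exp (airyPhase x t ξ * Complex.I) * f ξ) := by
  rw [L2.inner_def]
  refine integral_congr_ae ?_
  filter_upwards [(memLp_besselWeight_smul_exp hs).coeFn_toLp, hf.coeFn_toLp] with ξ hv hb
  rw [airyVector, hv, hb, RCLike.inner_apply', Complex.real_smul, Complex.real_smul, map_mul,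
    Complex.conj_ofReal, ← Complex.exp_conj, map_mul, Complex.conj_ofReal, Complex.conj_I,
    Complex.ofReal_neg, neg_mul_neg, mul_assoc]

theorem inner_airyVector_airyVector (hs : 1 / 2 < s) :
    inner ℂ (airyVector hs x t) (airyVector hs y r) = airyKernel s (x - y) (t - r) := by
  rw [airyVector.eq_1 hs y r, inner_airyVector_toLp, airyKernel]
  congr with ξ
  rw [mul_smul_comm, smul_smul, besselWeight_mul_besselWeight, add_halves, ← Complex.exp_add,
    ← add_mul, ← Complex.ofReal_add, ← sub_eq_add_neg, airyPhase_sub]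

theorem norm_airyVector_le (hs : 1 / 2 < s) : ‖airyVector hs x t‖ ≤ √(∫ ξ, besselWeight s ξ) := by
  refine Real.le_sqrt_of_sq_le ?_
  rw [norm_sq_eq_re_inner (𝕜 := ℂ), inner_airyVector_airyVector]
  exact (RCLike.re_le_norm _).trans norm_airyKernel_le

theorem continuous_airyVector (hs : 1 / 2 < s) :
    Continuous fun p : ℝ × ℝ ↦ airyVector hs p.1 p.2 := by
  refine continuous_of_continuous_inner (𝕜 := ℂ) ?_
  simp only [inner_airyVector_airyVector]
  exact (continuous_airyKernel hs).comp (f := fun q : (ℝ × ℝ) × ℝ × ℝ ↦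
    (q.1.1 - q.2.1, q.1.2 - q.2.2)) (by fun_prop)

theorem exists_lintegral_iSup_enorm_inner_airyVector_le (h0 : 3 / 4 < s) (h1 : s ≤ 1) :
    ∃ M : ℝ≥0∞, M ≠ ∞ ∧ ∀ b,
      ∫⁻ x, ⨆ t : Set.Icc (-1 : ℝ) 1,
        ‖inner ℂ (airyVector (s := s) (by linarith) x t) b‖ₑ ^ 2 ≤ M * ‖b‖ₑ ^ 2 := by
  have hs : 1 / 2 < s := by linarith
  let k (x : ℝ) := ENNReal.ofReal (4 * airyDecayConst s * (1 + ‖x‖) ^ (-(s + 1 / 4)))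
  have k_integrable : ∫⁻ x, k x < ∞ :=
    ((integrable_one_add_norm (by rw [Module.finrank_self]; norm_num; linarith)).const_mul
      _).lintegral_lt_top
  refine ⟨∫⁻ x, k x, k_integrable.ne, lintegral_iSup_enorm_inner_sq_le (k := fun x y ↦ k (x - y))
    (fun t ↦ ?_) (fun x ↦ ?_) (fun x t ↦ norm_airyVector_le hs) (fun x y t r ↦ ?_)
    fun x ↦ (lintegral_sub_left_eq_self k x).le⟩
  · exact ((continuous_airyVector hs).comp (Continuous.prodMk_left (t : ℝ))).stronglyMeasurable
  · exact (continuous_airyVector hs).comp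
      ((Continuous.prodMk_right x).comp continuous_subtype_val)
  · rw [inner_airyVector_airyVector, ← ofReal_norm]
    refine ENNReal.ofReal_le_ofReal (norm_airyKernel_le_one_add_abs hs h1 (abs_le.2 ?_))
    constructor <;> linarith [t.2.1, t.2.2, r.2.1, r.2.2]

end AiryVector

section SchwartzData

variable {s r ξ : ℝ}

theorem besselWeight_neg_le_one_add_abs_rpow (hr : 0 ≤ r) (hrs : r ≤ s) :
    besselWeight (-r) ξ ≤ (1 + |ξ|) ^ (2 * s) := by
  calc besselWeight (-r) ξ ≤ ((1 + |ξ|) ^ (2 : ℝ)) ^ r := by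
        rw [besselWeight, neg_neg, Real.rpow_two]
        gcongr
        linarith [sq_abs ξ, abs_nonneg ξ]
    _ = (1 + |ξ|) ^ (2 * r) := (Real.rpow_mul (by positivity) _ _).symm
    _ ≤ (1 + |ξ|) ^ (2 * s) := by
        gcongr
        linarith [abs_nonneg ξ]

theorem one_add_abs_rpow_le_mul_besselWeight_neg (hs : 0 ≤ s) :
    (1 + |ξ|) ^ (2 * s) ≤ 2 ^ s * besselWeight (-s) ξ := by
  calc (1 + |ξ|) ^ (2 * s) = ((1 + |ξ|) ^ 2) ^ s := by
        rw [Real.rpow_mul (by positivity), Real.rpow_two]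
    _ ≤ (2 * (1 + ξ ^ 2)) ^ s := by
        gcongr
        linarith [sq_abs ξ, sq_nonneg (1 - |ξ|)]
    _ = 2 ^ s * besselWeight (-s) ξ := by
        rw [Real.mul_rpow (by norm_num) (by positivity), besselWeight, neg_neg]

theorem hasTemperateGrowth_besselWeight (r : ℝ) : (besselWeight r).HasTemperateGrowth := by
  have weight_eq : besselWeight r = fun ξ ↦ (1 + ‖ξ‖ ^ 2) ^ (-r) := by
    ext ξ
    rw [besselWeight, Real.norm_eq_abs, sq_abs]
  rw [weight_eq]
  exact Function.hasTemperateGrowth_one_add_norm_sq_rpow ℝ (-r)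

theorem memLp_besselWeight_smul (r : ℝ) (a : SchwartzMap ℝ ℂ) :
    MemLp (fun ξ ↦ besselWeight r ξ • a ξ) 2 := by
  refine ((SchwartzMap.smulLeftCLM ℂ (besselWeight r) a).memLp 2).ae_eq (.of_forall fun ξ ↦ ?_)
  exact SchwartzMap.smulLeftCLM_apply_apply (hasTemperateGrowth_besselWeight r) a ξ

theorem norm_besselWeight_smul_sq {z : ℂ} :
    ‖besselWeight (r / 2) ξ • z‖ ^ 2 = besselWeight r ξ * ‖z‖ ^ 2 := by
  rw [norm_smul, Real.norm_of_nonneg besselWeight_pos.le, mul_pow, sq (besselWeight _ _),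
    besselWeight_mul_besselWeight, add_halves]

theorem integrable_besselWeight_mul_norm_sq (r : ℝ) (a : SchwartzMap ℝ ℂ) :
    Integrable fun ξ ↦ besselWeight r ξ * ‖a ξ‖ ^ 2 := by
  simpa only [norm_besselWeight_smul_sq] using
    (memLp_besselWeight_smul (r / 2) a).integrable_norm_pow (by norm_num)

theorem enorm_toLp_two_sq {X E : Type*} [MeasurableSpace X] [NormedAddCommGroup E]
    {μ : Measure X} {f : X → E} (hf : MemLp f 2 μ) :
    ‖hf.toLp‖ₑ ^ 2 = ENNReal.ofReal (∫ x, ‖f x‖ ^ 2 ∂μ) := by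
  have integral_nonneg : 0 ≤ ∫ x, ‖f x‖ ^ 2 ∂μ := integral_nonneg fun x ↦ by positivity
  rw [Lp.enorm_toLp, hf.eLpNorm_eq_integral_rpow_norm two_ne_zero ofNat_ne_top, toReal_ofNat,
    ← ENNReal.ofReal_pow (by positivity)]
  simp only [Real.rpow_two]
  rw [← Real.rpow_natCast, ← Real.rpow_mul integral_nonneg]
  norm_num

theorem enorm_toLp_besselWeight_smul_sq (r : ℝ) (a : SchwartzMap ℝ ℂ) :
    ‖(memLp_besselWeight_smul (r / 2) a).toLp‖ₑ ^ 2 =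
      ENNReal.ofReal (∫ ξ, besselWeight r ξ * ‖a ξ‖ ^ 2) := by
  simp only [enorm_toLp_two_sq, norm_besselWeight_smul_sq]

theorem integrable_one_add_abs_rpow_mul_norm_sq (hs : 0 ≤ s) (a : SchwartzMap ℝ ℂ) :
    Integrable fun ξ ↦ (1 + |ξ|) ^ (2 * s) * ‖a ξ‖ ^ 2 := by
  have weight_cont : Continuous fun ξ : ℝ ↦ (1 + |ξ|) ^ (2 * s) :=
    (continuous_const.add continuous_abs).rpow_const fun ξ ↦ Or.inr (by positivity)
  refine ((integrable_besselWeight_mul_norm_sq (-s) a).const_mul (2 ^ s)).mono'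
    (weight_cont.mul (a.continuous.norm.pow 2)).aestronglyMeasurable (.of_forall fun ξ ↦ ?_)
  rw [Real.norm_of_nonneg (by positivity), ← mul_assoc]
  gcongr
  exact one_add_abs_rpow_le_mul_besselWeight_neg hs

theorem integral_besselWeight_neg_mul_norm_sq_le (hr : 0 ≤ r) (hrs : r ≤ s)
    (a : SchwartzMap ℝ ℂ) : ∫ ξ, besselWeight (-r) ξ * ‖a ξ‖ ^ 2 ≤
      ∫ ξ, (1 + |ξ|) ^ (2 * s) * ‖a ξ‖ ^ 2 := by
  refine integral_mono (integrable_besselWeight_mul_norm_sq _ a)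
    (integrable_one_add_abs_rpow_mul_norm_sq (hr.trans hrs) a) fun ξ ↦ ?_
  dsimp only
  gcongr
  exact besselWeight_neg_le_one_add_abs_rpow hr hrs

theorem inner_airyVector_toLp_besselWeight_smul (hs : 1 / 2 < s) {x t : ℝ} (a : SchwartzMap ℝ ℂ) :
    inner ℂ (airyVector hs x t) (memLp_besselWeight_smul (-s / 2) a).toLp =
      ∫ ξ, Complex.exp (airyPhase x t ξ * Complex.I) * a ξ := by
  rw [inner_airyVector_toLp]
  congr with ξ
  rw [mul_smul_comm, smul_smul, besselWeight_mul_besselWeight, neg_div, add_neg_cancel,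
    besselWeight, neg_zero, Real.rpow_zero, one_smul]

theorem exists_lintegral_iSup_enorm_airy_le (hs : 3 / 4 < s) :
    ∃ M : ℝ≥0∞, M ≠ ∞ ∧ ∀ a : SchwartzMap ℝ ℂ,
      ∫⁻ x, ⨆ t : Set.Icc (-1 : ℝ) 1,
        ‖∫ ξ, Complex.exp (airyPhase x t ξ * Complex.I) * a ξ‖ₑ ^ 2 ≤
      M * ENNReal.ofReal (∫ ξ, (1 + |ξ|) ^ (2 * s) * ‖a ξ‖ ^ 2) := by
  obtain ⟨M, hM, le_M⟩ := exists_lintegral_iSup_enorm_inner_airyVector_le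
    (lt_min hs (by norm_num)) (min_le_right s 1)
  refine ⟨M, hM, fun a ↦ ?_⟩
  have bound := le_M (memLp_besselWeight_smul (-min s 1 / 2) a).toLp
  simp only [inner_airyVector_toLp_besselWeight_smul, enorm_toLp_besselWeight_smul_sq] at bound
  refine bound.trans ?_
  gcongr M * ENNReal.ofReal ?_
  exact integral_besselWeight_neg_mul_norm_sq_le (le_min (by linarith) zero_le_one)
    (min_le_left s 1) a

theorem exists_schwartzMap_apply_eq_integral (u : SchwartzMap ℝ ℂ) :
    ∃ a : SchwartzMap ℝ ℂ, ∀ ξ : ℝ, ∫ y : ℝ, Complex.exp (-Complex.I * y * ξ) * u y = a ξ := by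
  have hpi : (2 * Real.pi)⁻¹ ≠ 0 := by positivity
  refine ⟨SchwartzMap.compCLMOfContinuousLinearEquiv ℂ
    (ContinuousLinearEquiv.unitsEquivAut ℝ (Units.mk0 _ hpi)) (FourierTransform.fourier u),
    fun ξ ↦ ?_⟩
  rw [SchwartzMap.compCLMOfContinuousLinearEquiv_apply, Function.comp_apply,
    SchwartzMap.fourier_coe, Real.fourier_real_eq_integral_exp_smul]
  congr! 3 with y
  have : (Real.pi : ℂ) ≠ 0 := by exact_mod_cast Real.pi_ne_zero
  rw [ContinuousLinearEquiv.unitsEquivAut_apply, Units.val_mk0]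
  push_cast
  field_simp

theorem ofReal_biSup_norm_mul_sq_le {S S' : Set ℝ} (hS : S ⊆ S') {c : ℂ} (hc : ‖c‖ ≤ 1)
    (g : ℝ → ℂ) :
    ENNReal.ofReal ((⨆ t ∈ S, ‖c * g t‖) ^ 2) ≤ ⨆ t : S', ‖g t‖ₑ ^ 2 := by
  set m := ⨆ t : S', ‖g t‖ₑ with hm
  have le_m {t : ℝ} (ht : t ∈ S') : ‖g t‖ₑ ≤ m := le_iSup (fun t : S' ↦ ‖g t‖ₑ) ⟨t, ht⟩
  rw [← ENNReal.iSup_pow_of_ne_zero two_ne_zero, ← hm]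
  by_cases m_top : m = ∞
  · simp [m_top]
  rw [← ENNReal.ofReal_toReal m_top, ← ENNReal.ofReal_pow toReal_nonneg]
  have iSup_nonneg : 0 ≤ ⨆ t ∈ S, ‖c * g t‖ :=
    Real.iSup_nonneg fun t ↦ Real.iSup_nonneg fun _ ↦ norm_nonneg _
  gcongr
  refine Real.iSup_le (fun t ↦ Real.iSup_le (fun ht ↦ ?_) toReal_nonneg) toReal_nonneg
  rw [norm_mul, ← toReal_enorm (g t)]
  exact (mul_le_of_le_one_left toReal_nonneg hc).trans (toReal_mono m_top (le_m (hS ht)))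

theorem norm_one_div_two_mul_pi_le_one : ‖(1 / (2 * Real.pi) : ℂ)‖ ≤ 1 := by
  rw [norm_div, norm_one, norm_mul, RCLike.norm_ofNat, Complex.norm_real,
    Real.norm_of_nonneg Real.pi_pos.le]
  exact div_le_one_of_le₀ (by linarith [Real.pi_gt_three]) (by positivity)

end SchwartzData

/-- Maximal-function estimate for the Airy group (Kenig–Ponce–Vega):
for `s > 3/4`, `‖e^{−t∂ₓ³}u₀‖_{L²ₓ L^∞_{|t|≤T}} ≤ C ‖u₀‖_{H^s}` for `0 < T ≤ 1`. -/
theorem airy_maximal (s : ℝ) (hs : 3 / 4 < s) :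
    ∃ C > 0, ∀ T : ℝ, 0 < T → T ≤ 1 → ∀ u₀ : SchwartzMap ℝ ℂ,
      (∫⁻ x : ℝ, ENNReal.ofReal
          ((⨆ t ∈ Set.Icc (-T) T,
            ‖(1 / (2 * Real.pi) : ℂ) *
              ∫ ξ : ℝ, Complex.exp (Complex.I * ((x : ℂ) * ξ + (t : ℂ) * (ξ : ℂ) ^ 3)) *
                ∫ y : ℝ, Complex.exp (-Complex.I * y * ξ) * u₀ y‖) ^ 2)) ^ ((1 : ℝ) / 2) ≤
      ENNReal.ofReal (C *
        (∫ ξ : ℝ, (1 + |ξ|) ^ (2 * s) *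
          ‖∫ y : ℝ, Complex.exp (-Complex.I * y * ξ) * u₀ y‖ ^ 2) ^ ((1 : ℝ) / 2)) := by
  obtain ⟨M, hM, le_M⟩ := exists_lintegral_iSup_enorm_airy_le hs
  refine ⟨(M.toReal + 1) ^ ((1 : ℝ) / 2), by positivity, fun T _ hT u₀ ↦ ?_⟩
  obtain ⟨a, ha⟩ := exists_schwartzMap_apply_eq_integral u₀
  have energy_nonneg : 0 ≤ ∫ ξ, (1 + |ξ|) ^ (2 * s) * ‖a ξ‖ ^ 2 :=
    integral_nonneg fun ξ ↦ by positivity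
  have M_le : M ≤ ENNReal.ofReal (M.toReal + 1) :=
    (ENNReal.ofReal_toReal hM).symm.trans_le (ENNReal.ofReal_le_ofReal (by linarith))
  simp only [ha, ← airyPhase_mul_I]
  rw [← Real.mul_rpow (by positivity) energy_nonneg,
    ← ENNReal.ofReal_rpow_of_nonneg (by positivity) (by norm_num),
    ENNReal.ofReal_mul (by positivity)]
  refine ENNReal.rpow_le_rpow ?_ (by norm_num)
  have times_subset : Set.Icc (-T) T ⊆ Set.Icc (-1) 1 := Set.Icc_subset_Icc (neg_le_neg hT) hT
  refine (lintegral_mono fun x ↦ ofReal_biSup_norm_mul_sq_le times_subset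
    norm_one_div_two_mul_pi_le_one _).trans ?_
  exact (le_M a).trans (by gcongr)
end

section
/- There exists a constant C > 0 such that for every Schwartz function u₀ : ℝ → ℂ and every x ∈ ℝ one has ( ∫_ℝ |∂_x(e^{−t∂_x³}u₀)(x)|² dt )^{1/2} ≤ C ‖u₀‖_{L²(ℝ)}, where the integral is over t ∈ ℝ and ∂_x denotes the spatial derivative. -/
open MeasureTheory ENNReal

/-!
After rescaling the frequency, `∂ₓ e^{-t∂ₓ³}u(x) = ∫ 𝐞(φ(ξ)t) 𝐞(xξ) 2πiξ û(ξ) dξ` with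
`φ(ξ) = 4π²ξ³`. For fixed `x`, the substitution `v = φ(ξ)` exhibits this as an inverse Fourier
transform in `t`, so Plancherel gives `∫ |∂ₓ e^{-t∂ₓ³}u(x)|² dt = ∫ |2πξ û(ξ)|² / |φ'(ξ)| dξ`.
Since `|2πξ|² = φ'(ξ) / 3`, this is exactly `‖u‖² / 3`, for every `x`.
-/

open FourierTransform SchwartzMap

section Plancherel

variable {V E : Type*} [NormedAddCommGroup V] [InnerProductSpace ℝ V] [FiniteDimensional ℝ V]
  [MeasurableSpace V] [BorelSpace V] [NormedAddCommGroup E]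

theorem ae_eq_of_forall_integral_schwartzMap_smul_eq [NormedSpace ℂ E] [CompleteSpace E]
    {μ : Measure V} {f g : V → E} (hf : LocallyIntegrable f μ) (hg : LocallyIntegrable g μ)
    (h : ∀ ψ : 𝓢(V, ℂ), ∫ v, ψ v • f v ∂μ = ∫ v, ψ v • g v ∂μ) : f =ᵐ[μ] g := by
  refine ae_eq_of_integral_contDiff_smul_eq hf hg fun χ χ_smooth χ_cpt => ?_
  have hψ_cpt : HasCompactSupport (Complex.ofRealCLM ∘ χ) := χ_cpt.comp_left rfl
  exact h (hψ_cpt.toSchwartzMap (by fun_prop))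

theorem continuous_fourier [NormedSpace ℂ E] {f : V → E} (hf : Integrable f) : Continuous (𝓕 f) :=
  VectorFourier.fourierIntegral_continuous Real.continuous_fourierChar continuous_inner hf

theorem integral_schwartzMap_smul_fourier [NormedSpace ℂ E] [CompleteSpace E] {f : V → E}
    (hf : Integrable f) (ψ : 𝓢(V, ℂ)) : ∫ v, ψ v • 𝓕 f v = ∫ v, 𝓕 ψ v • f v := by
  simpa using! (VectorFourier.integral_fourierIntegral_smul_eq_flip (L := innerₗ V)
    (μ := volume) (ν := volume) Real.continuous_fourierChar continuous_inner ψ.integrable hf).symm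

variable [InnerProductSpace ℂ E] [CompleteSpace E]

theorem integral_schwartzMap_smul_fourier_Lp (G : Lp E 2 (volume : Measure V)) (ψ : 𝓢(V, ℂ)) :
    ∫ v, ψ v • (𝓕 G : Lp E 2 (volume : Measure V)) v = ∫ v, 𝓕 ψ v • G v := by
  simpa only [TemperedDistribution.fourier_apply, Lp.toTemperedDistribution_apply] using
    congrArg (fun T : 𝓢'(V, E) => T ψ) (Lp.fourier_toTemperedDistribution_eq G).symm

theorem fourier_ae_eq_fourier_Lp_iff {f : V → E} (hf : Integrable f)
    (G : Lp E 2 (volume : Measure V)) :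
    𝓕 f =ᵐ[volume] (𝓕 G : Lp E 2 (volume : Measure V)) ↔ f =ᵐ[volume] G := by
  have hG (G : Lp E 2 (volume : Measure V)) : LocallyIntegrable G :=
    (Lp.memLp G).locallyIntegrable one_le_two
  constructor <;> intro h
  · refine ae_eq_of_forall_integral_schwartzMap_smul_eq hf.locallyIntegrable (hG G) fun ψ => ?_
    calc ∫ v, ψ v • f v = ∫ v, 𝓕⁻ ψ v • 𝓕 f v := by
          rw [integral_schwartzMap_smul_fourier hf, fourier_fourierInv_eq]
      _ = ∫ v, 𝓕⁻ ψ v • (𝓕 G : Lp E 2 (volume : Measure V)) v :=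
          integral_congr_ae (h.mono fun v hv => by simp only [hv])
      _ = ∫ v, ψ v • G v := by
          rw [integral_schwartzMap_smul_fourier_Lp, fourier_fourierInv_eq]
  · refine ae_eq_of_forall_integral_schwartzMap_smul_eq
      (continuous_fourier hf).locallyIntegrable (hG _) fun ψ => ?_
    rw [integral_schwartzMap_smul_fourier hf, integral_schwartzMap_smul_fourier_Lp]
    exact integral_congr_ae (h.mono fun v hv => by simp only [hv])

theorem eLpNorm_fourier_Lp (G : Lp E 2 (volume : Measure V)) :
    eLpNorm (𝓕 G : Lp E 2 (volume : Measure V)) 2 volume = eLpNorm G 2 volume := by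
  simp only [← Lp.enorm_def, ← ofReal_norm, Lp.norm_fourier_eq]

theorem eLpNorm_two_fourier_eq {f : V → E} (hf : Integrable f) :
    eLpNorm (𝓕 f) 2 volume = eLpNorm f 2 volume := by
  have of_ae_eq (G : Lp E 2 (volume : Measure V)) (hG : f =ᵐ[volume] G) :
      eLpNorm (𝓕 f) 2 volume = eLpNorm f 2 volume := by
    rw [eLpNorm_congr_ae ((fourier_ae_eq_fourier_Lp_iff hf G).2 hG), eLpNorm_fourier_Lp,
      eLpNorm_congr_ae hG]
  by_cases hf₂ : MemLp f 2
  · exact of_ae_eq (hf₂.toLp f) hf₂.coeFn_toLp.symm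
  by_cases hF₂ : MemLp (𝓕 f) 2
  · refine of_ae_eq (𝓕⁻ (hF₂.toLp _)) ((fourier_ae_eq_fourier_Lp_iff hf _).1 ?_)
    rw [fourier_fourierInv_eq]
    exact hF₂.coeFn_toLp.symm
  · have eq_top {g : V → E} (hg : AEStronglyMeasurable g) (h : ¬MemLp g 2) :
        eLpNorm g 2 volume = ⊤ := by simpa [MemLp, hg] using h
    rw [eq_top (continuous_fourier hf).aestronglyMeasurable hF₂, eq_top hf.1 hf₂]

theorem lintegral_enorm_sq_fourier {f : V → E} (hf : Integrable f) :
    ∫⁻ w, ‖𝓕 f w‖ₑ ^ 2 = ∫⁻ v, ‖f v‖ₑ ^ 2 := by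
  have sq_eLpNorm (g : V → E) : eLpNorm g 2 volume ^ 2 = ∫⁻ v, ‖g v‖ₑ ^ 2 := by
    simpa using! eLpNorm_nnreal_pow_eq_lintegral (f := g) (μ := volume) (p := 2) two_ne_zero
  rw [← sq_eLpNorm, eLpNorm_two_fourier_eq hf, sq_eLpNorm]

theorem lintegral_enorm_sq_fourierInv {f : V → E} (hf : Integrable f) :
    ∫⁻ w, ‖𝓕⁻ f w‖ₑ ^ 2 = ∫⁻ v, ‖f v‖ₑ ^ 2 := by
  simp_rw [Real.fourierInv_eq_fourier_neg]
  rw [lintegral_neg_eq_self (fun w => ‖𝓕 f w‖ₑ ^ 2), lintegral_enorm_sq_fourier hf]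

end Plancherel

section OscillatoryIntegral

variable {E : Type*} [NormedAddCommGroup E] {s : Set ℝ} {φ φ' : ℝ → ℝ} {f : ℝ → E}

/-- The density of the image of the vector measure `f(ξ) dξ` on `s` under a map `φ` which is
injective on `s` with derivative `φ'`, namely `v ↦ |φ'(φ⁻¹ v)|⁻¹ f(φ⁻¹ v)` on `φ '' s`,
extended by zero. It turns an oscillatory integral with phase `φ` into a Fourier integral. -/
noncomputable def pushforwardDensity [NormedSpace ℝ E] (s : Set ℝ) (φ φ' : ℝ → ℝ) (f : ℝ → E) :
    ℝ → E :=
  (φ '' s).indicator fun v =>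
    |φ' (Function.invFunOn φ s v)|⁻¹ • f (Function.invFunOn φ s v)

theorem pushforwardDensity_apply [NormedSpace ℝ E] (hinj : s.InjOn φ) {ξ : ℝ} (hξ : ξ ∈ s) :
    pushforwardDensity s φ φ' f (φ ξ) = |φ' ξ|⁻¹ • f ξ := by
  rw [pushforwardDensity, Set.indicator_of_mem (Set.mem_image_of_mem φ hξ),
    hinj.leftInvOn_invFunOn hξ]

theorem abs_deriv_smul_pushforwardDensity [NormedSpace ℝ E] (hinj : s.InjOn φ)
    (hφ'₀ : ∀ ξ ∈ s, φ' ξ ≠ 0) {ξ : ℝ} (hξ : ξ ∈ s) :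
    |φ' ξ| • pushforwardDensity s φ φ' f (φ ξ) = f ξ := by
  rw [pushforwardDensity_apply hinj hξ, smul_inv_smul₀ (abs_ne_zero.2 (hφ'₀ ξ hξ))]

theorem integrable_pushforwardDensity [NormedSpace ℝ E] (hs : MeasurableSet s)
    (hφ : ∀ ξ ∈ s, HasDerivWithinAt φ (φ' ξ) s ξ) (hinj : s.InjOn φ)
    (hφ'₀ : ∀ ξ ∈ s, φ' ξ ≠ 0) (hf : IntegrableOn f s) :
    Integrable (pushforwardDensity s φ φ' f) := by
  refine IntegrableOn.integrable_of_forall_notMem_eq_zero (s := φ '' s) ?_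
    fun v hv => Set.indicator_of_notMem hv _
  rw [integrableOn_image_iff_integrableOn_abs_deriv_smul hs hφ hinj]
  exact hf.congr_fun (fun ξ hξ => (abs_deriv_smul_pushforwardDensity hinj hφ'₀ hξ).symm) hs

theorem fourierInv_pushforwardDensity [NormedSpace ℂ E] (hs : MeasurableSet s)
    (hφ : ∀ ξ ∈ s, HasDerivWithinAt φ (φ' ξ) s ξ) (hinj : s.InjOn φ)
    (hφ'₀ : ∀ ξ ∈ s, φ' ξ ≠ 0) (t : ℝ) :
    𝓕⁻ (pushforwardDensity s φ φ' f) t = ∫ ξ in s, 𝐞 (φ ξ * t) • f ξ := by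
  have hsupp : ∀ v ∉ φ '' s, 𝐞 (v * t) • pushforwardDensity s φ φ' f v = 0 := fun v hv => by
    rw [pushforwardDensity, Set.indicator_of_notMem hv, smul_zero]
  calc 𝓕⁻ (pushforwardDensity s φ φ' f) t
      = ∫ v, 𝐞 (v * t) • pushforwardDensity s φ φ' f v := by
        simp only [Real.fourierInv_eq, RCLike.inner_apply, conj_trivial, mul_comm]
    _ = ∫ v in φ '' s, 𝐞 (v * t) • pushforwardDensity s φ φ' f v :=
        (setIntegral_eq_integral_of_forall_compl_eq_zero hsupp).symm
    _ = ∫ ξ in s, |φ' ξ| • 𝐞 (φ ξ * t) • pushforwardDensity s φ φ' f (φ ξ) :=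
        integral_image_eq_integral_abs_deriv_smul hs hφ hinj _
    _ = ∫ ξ in s, 𝐞 (φ ξ * t) • f ξ :=
        setIntegral_congr_fun hs fun ξ hξ => by
          rw [smul_comm, abs_deriv_smul_pushforwardDensity hinj hφ'₀ hξ]

theorem lintegral_enorm_sq_pushforwardDensity [NormedSpace ℝ E] (hs : MeasurableSet s)
    (hφ : ∀ ξ ∈ s, HasDerivWithinAt φ (φ' ξ) s ξ) (hinj : s.InjOn φ)
    (hφ'₀ : ∀ ξ ∈ s, φ' ξ ≠ 0) :
    ∫⁻ v, ‖pushforwardDensity s φ φ' f v‖ₑ ^ 2 = ∫⁻ ξ in s, ‖f ξ‖ₑ ^ 2 / ‖φ' ξ‖ₑ := by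
  have hsupp : (fun v => ‖pushforwardDensity s φ φ' f v‖ₑ ^ 2).support ⊆ φ '' s := by
    refine Function.support_subset_iff'.2 fun v hv => ?_
    simp [pushforwardDensity, Set.indicator_of_notMem hv]
  rw [← setLIntegral_eq_of_support_subset hsupp,
    lintegral_image_eq_lintegral_abs_deriv_mul hs hφ hinj]
  refine setLIntegral_congr_fun hs fun ξ hξ => ?_
  have hpos : ‖φ' ξ‖ₑ ≠ 0 := enorm_ne_zero.2 (hφ'₀ ξ hξ)
  rw [pushforwardDensity_apply hinj hξ, enorm_smul, enorm_inv (abs_ne_zero.2 (hφ'₀ ξ hξ)),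
    Real.enorm_abs, ← Real.enorm_eq_ofReal_abs, mul_pow, sq ‖φ' ξ‖ₑ⁻¹, ← mul_assoc, ← mul_assoc,
    ENNReal.mul_inv_cancel hpos enorm_ne_top, one_mul, mul_comm, div_eq_mul_inv]

theorem lintegral_enorm_sq_integral_fourierChar_smul [InnerProductSpace ℂ E] [CompleteSpace E]
    (hs : MeasurableSet s) (hφ : ∀ ξ ∈ s, HasDerivWithinAt φ (φ' ξ) s ξ) (hinj : s.InjOn φ)
    (hφ'₀ : ∀ ξ ∈ s, φ' ξ ≠ 0) (hf : IntegrableOn f s) :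
    ∫⁻ t, ‖∫ ξ in s, 𝐞 (φ ξ * t) • f ξ‖ₑ ^ 2 = ∫⁻ ξ in s, ‖f ξ‖ₑ ^ 2 / ‖φ' ξ‖ₑ := by
  simp_rw [← fourierInv_pushforwardDensity hs hφ hinj hφ'₀]
  rw [lintegral_enorm_sq_fourierInv (integrable_pushforwardDensity hs hφ hinj hφ'₀ hf),
    lintegral_enorm_sq_pushforwardDensity hs hφ hinj hφ'₀]

end OscillatoryIntegral

section FourierInv

variable {E : Type*} [NormedAddCommGroup E]

theorem integrable_circle_smul [NormedSpace ℂ E] {X : Type*} [MeasurableSpace X] {μ : Measure X}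
    {c : X → Circle} {f : X → E} (hc : AEStronglyMeasurable c μ) (hf : Integrable f μ) :
    Integrable (fun x => c x • f x) μ :=
  hf.mono (hc.smul hf.1) (ae_of_all _ fun x => (Circle.norm_smul (c x) (f x)).le)

theorem integrable_of_integrable_id_smul [NormedSpace ℝ E] {f : ℝ → E}
    (hf : LocallyIntegrable f) (hf' : Integrable fun ξ : ℝ => ξ • f ξ) : Integrable f := by
  refine hf.integrable_of_isBigO_cocompact (Asymptotics.IsBigO.of_bound 1 ?_)
    (hf'.integrableAtFilter _)
  filter_upwards [tendsto_norm_cocompact_atTop.eventually_ge_atTop 1] with ξ hξ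
  rw [one_mul, norm_smul]
  exact le_mul_of_one_le_left (norm_nonneg _) hξ

theorem integrable_id_smul_schwartzMap [NormedSpace ℝ E] (ψ : 𝓢(ℝ, E)) :
    Integrable fun ξ : ℝ => ξ • ψ ξ := by
  refine (ψ.integrable_pow_mul volume 1).mono' (by fun_prop) (ae_of_all _ fun ξ => ?_)
  rw [norm_smul, pow_one]

theorem hasDerivAt_fourierInv [NormedSpace ℂ E] {f : ℝ → E} (hf : Integrable f)
    (hf' : Integrable fun ξ : ℝ => ξ • f ξ) (x : ℝ) :
    HasDerivAt (𝓕⁻ f) (𝓕⁻ (fun ξ : ℝ => (2 * Real.pi * Complex.I) • ξ • f ξ) x) x := by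
  have h := (Real.hasDerivAt_fourier hf hf' (-x)).scomp x (hasDerivAt_neg x)
  have hF : 𝓕⁻ f = 𝓕 f ∘ Neg.neg := funext (Real.fourierInv_eq_fourier_neg f)
  rw [hF, Real.fourierInv_eq_fourier_neg]
  convert h using 1
  simp [Real.fourier_real_eq, ← integral_neg, mul_smul]

end FourierInv

section AiryFlow

variable {E : Type*} [NormedAddCommGroup E]

/-- The Airy group `e^{-t∂ₓ³}`, applied to `u` and evaluated at `x`, in the normalisation
`û(ξ) = ∫ e^{-izξ} u(z) dz`; its integrals are meaningful if `u` and `û` are integrable. -/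
noncomputable def airyFlow [NormedSpace ℂ E] (t : ℝ) (u : ℝ → E) (x : ℝ) : E :=
  (1 / (2 * Real.pi) : ℂ) •
    ∫ ξ : ℝ, Complex.exp (Complex.I * ((x : ℂ) * ξ + (t : ℂ) * (ξ : ℂ) ^ 3)) •
      ∫ z : ℝ, Complex.exp (-Complex.I * z * ξ) • u z

theorem integral_exp_smul_eq_fourier [NormedSpace ℂ E] (u : ℝ → E) (ξ : ℝ) :
    ∫ z : ℝ, Complex.exp (-Complex.I * z * ξ) • u z = 𝓕 u (ξ / (2 * Real.pi)) := by
  have hpi : (Real.pi : ℂ) ≠ 0 := Complex.ofReal_ne_zero.2 Real.pi_ne_zero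
  rw [Real.fourier_real_eq_integral_exp_smul]
  congr with z
  push_cast
  field_simp

theorem airyFlow_eq_fourierInv [NormedSpace ℂ E] (t : ℝ) (u : ℝ → E) :
    airyFlow t u = 𝓕⁻ fun ξ : ℝ => 𝐞 (4 * Real.pi ^ 2 * ξ ^ 3 * t) • 𝓕 u ξ := by
  have hpi : (Real.pi : ℂ) ≠ 0 := Complex.ofReal_ne_zero.2 Real.pi_ne_zero
  ext x
  let g : ℝ → E := fun ξ => 𝐞 (ξ * x) • 𝐞 (4 * Real.pi ^ 2 * ξ ^ 3 * t) • 𝓕 u ξ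
  have hg (ξ : ℝ) : Complex.exp (Complex.I * ((x : ℂ) * ξ + (t : ℂ) * (ξ : ℂ) ^ 3)) •
      𝓕 u (ξ / (2 * Real.pi)) = g (ξ / (2 * Real.pi)) := by
    simp only [g, Circle.smul_def, Real.fourierChar_apply, smul_smul, ← Complex.exp_add]
    congr 2
    push_cast
    field_simp
    ring
  calc airyFlow t u x
      = (1 / (2 * Real.pi) : ℂ) • ∫ ξ : ℝ, g (ξ / (2 * Real.pi)) := by
        simp_rw [airyFlow, integral_exp_smul_eq_fourier, hg]
    _ = ∫ ξ, g ξ := by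
        rw [Measure.integral_comp_div, abs_of_pos Real.two_pi_pos, ← Complex.coe_smul, smul_smul]
        push_cast
        rw [one_div_mul_cancel (mul_ne_zero two_ne_zero hpi), one_smul]
    _ = 𝓕⁻ (fun ξ : ℝ => 𝐞 (4 * Real.pi ^ 2 * ξ ^ 3 * t) • 𝓕 u ξ) x := by
        simp only [g, Real.fourierInv_eq, RCLike.inner_apply, conj_trivial, mul_comm x]

theorem hasDerivAt_airyFlow [NormedSpace ℂ E] (t : ℝ) {u : ℝ → E} (hu : Integrable (𝓕 u))
    (hu' : Integrable fun ξ : ℝ => ξ • 𝓕 u ξ) (x : ℝ) :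
    HasDerivAt (airyFlow t u) (∫ ξ : ℝ, 𝐞 (4 * Real.pi ^ 2 * ξ ^ 3 * t) •
      𝐞 (ξ * x) • (2 * Real.pi * Complex.I) • ξ • 𝓕 u ξ) x := by
  have hmeas : AEStronglyMeasurable fun ξ : ℝ => 𝐞 (4 * Real.pi ^ 2 * ξ ^ 3 * t) :=
    (Real.continuous_fourierChar.comp (by fun_prop)).aestronglyMeasurable
  have hint : Integrable fun ξ : ℝ => ξ • 𝐞 (4 * Real.pi ^ 2 * ξ ^ 3 * t) • 𝓕 u ξ :=
    (integrable_circle_smul hmeas hu').congr (ae_of_all _ fun ξ => smul_comm _ _ _)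
  rw [airyFlow_eq_fourierInv]
  convert hasDerivAt_fourierInv (integrable_circle_smul hmeas hu) hint x using 1
  rw [Real.fourierInv_eq]
  congr with ξ
  rw [RCLike.inner_apply, conj_trivial, mul_comm x, smul_comm ξ (𝐞 _),
    smul_comm (_ : ℂ) (𝐞 (4 * Real.pi ^ 2 * ξ ^ 3 * t)), smul_comm (𝐞 (ξ * x)) (𝐞 _)]

theorem enorm_sq_smul_div_enorm_sq_mul_three [NormedSpace ℂ E] {ξ : ℝ} (hξ : ξ ≠ 0) (a : E) :
    ‖(2 * Real.pi * Complex.I) • ξ • a‖ₑ ^ 2 / ‖4 * Real.pi ^ 2 * (3 * ξ ^ 2)‖ₑ =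
      ‖a‖ₑ ^ 2 / 3 := by
  have hpos : ‖2 * Real.pi * ξ‖ₑ ≠ 0 := enorm_ne_zero.2 (by positivity)
  have hnum : ‖(2 * Real.pi * Complex.I) • ξ • a‖ₑ = ‖2 * Real.pi * ξ‖ₑ * ‖a‖ₑ := by
    rw [← enorm_smul, enorm_eq_iff_norm_eq]
    simp [norm_smul, mul_assoc]
  have hden : ‖4 * Real.pi ^ 2 * (3 * ξ ^ 2)‖ₑ = ‖2 * Real.pi * ξ‖ₑ ^ 2 * 3 := by
    rw [show 4 * Real.pi ^ 2 * (3 * ξ ^ 2) = (2 * Real.pi * ξ) ^ 2 * 3 by ring, enorm_mul,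
      enorm_pow, Real.enorm_of_nonneg zero_le_three, ENNReal.ofReal_ofNat]
  rw [hnum, hden, mul_pow, ENNReal.mul_div_mul_left _ _ (pow_ne_zero 2 hpos)
    (pow_ne_top enorm_ne_top)]

variable [InnerProductSpace ℂ E] [CompleteSpace E]

theorem lintegral_enorm_sq_integral_fourierChar_cubic_smul {a : ℝ} (ha : a ≠ 0) {f : ℝ → E}
    (hf : Integrable f) :
    ∫⁻ t, ‖∫ ξ, 𝐞 (a * ξ ^ 3 * t) • f ξ‖ₑ ^ 2 = ∫⁻ ξ, ‖f ξ‖ₑ ^ 2 / ‖a * (3 * ξ ^ 2)‖ₑ := by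
  have hderiv (ξ : ℝ) : HasDerivAt (fun ξ => a * ξ ^ 3) (a * (3 * ξ ^ 2)) ξ := by
    simpa using (hasDerivAt_pow 3 ξ).const_mul a
  have hinj : (fun ξ : ℝ => a * ξ ^ 3).Injective :=
    (mul_right_injective₀ ha).comp (Odd.strictMono_pow (by decide)).injective
  have hderiv_ne (ξ : ℝ) (hξ : ξ ∈ ({0}ᶜ : Set ℝ)) : a * (3 * ξ ^ 2) ≠ 0 :=
    mul_ne_zero ha (mul_ne_zero three_ne_zero (pow_ne_zero 2 hξ))
  simpa only [restrict_compl_singleton] using lintegral_enorm_sq_integral_fourierChar_smul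
    (measurableSet_singleton 0).compl (fun ξ _ => (hderiv ξ).hasDerivWithinAt) hinj.injOn
    hderiv_ne hf.integrableOn

theorem airy_smoothing_general {u : ℝ → E} (hu : Integrable u)
    (hu' : Integrable fun ξ : ℝ => ξ • 𝓕 u ξ) (x : ℝ) :
    ∫⁻ t, ‖deriv (airyFlow t u) x‖ₑ ^ 2 = (∫⁻ y, ‖u y‖ₑ ^ 2) / 3 := by
  let f : ℝ → E := fun ξ => 𝐞 (ξ * x) • (2 * Real.pi * Complex.I) • ξ • 𝓕 u ξ
  have hû : Integrable (𝓕 u) :=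
    integrable_of_integrable_id_smul (continuous_fourier hu).locallyIntegrable hu'
  have hf : Integrable f :=
    integrable_circle_smul (Real.continuous_fourierChar.comp (by fun_prop)).aestronglyMeasurable
      (hu'.smul (2 * Real.pi * Complex.I))
  calc ∫⁻ t, ‖deriv (airyFlow t u) x‖ₑ ^ 2
      = ∫⁻ t, ‖∫ ξ, 𝐞 (4 * Real.pi ^ 2 * ξ ^ 3 * t) • f ξ‖ₑ ^ 2 := by
        simp_rw [(hasDerivAt_airyFlow _ hû hu' x).deriv, f]
    _ = ∫⁻ ξ, ‖f ξ‖ₑ ^ 2 / ‖4 * Real.pi ^ 2 * (3 * ξ ^ 2)‖ₑ :=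
        lintegral_enorm_sq_integral_fourierChar_cubic_smul (by positivity) hf
    _ = ∫⁻ ξ, ‖𝓕 u ξ‖ₑ ^ 2 / 3 := by
        refine lintegral_congr_ae ((Measure.ae_ne volume 0).mono fun ξ hξ => ?_)
        have hf_enorm : ‖f ξ‖ₑ = ‖(2 * Real.pi * Complex.I) • ξ • 𝓕 u ξ‖ₑ :=
          enorm_eq_iff_norm_eq.2 (Circle.norm_smul _ _)
        simp only [hf_enorm, enorm_sq_smul_div_enorm_sq_mul_three hξ]
    _ = (∫⁻ y, ‖u y‖ₑ ^ 2) / 3 := by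
        simp_rw [div_eq_mul_inv]
        rw [lintegral_mul_const' _ _ (ENNReal.inv_ne_top.2 three_ne_zero),
          lintegral_enorm_sq_fourier hu]

end AiryFlow

theorem ofReal_integral_norm_sq {X E : Type*} [MeasurableSpace X] {μ : Measure X}
    [NormedAddCommGroup E] {f : X → E} (hf : MemLp f 2 μ) :
    ENNReal.ofReal (∫ x, ‖f x‖ ^ 2 ∂μ) = ∫⁻ x, ‖f x‖ₑ ^ 2 ∂μ := by
  rw [ofReal_integral_eq_lintegral_ofReal (hf.integrable_norm_pow two_ne_zero)
    (ae_of_all _ fun x => by positivity)]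
  simp_rw [ENNReal.ofReal_pow (norm_nonneg _), ofReal_norm]

/-- Kato-type local smoothing estimate for the Airy group (Kenig–Ponce–Vega):
`‖∂ₓ e^{−t∂ₓ³}u₀‖_{L^∞ₓ L²_t} ≤ C ‖u₀‖_{L²}`. -/
theorem airy_smoothing :
    ∃ C > 0, ∀ u₀ : SchwartzMap ℝ ℂ, ∀ x : ℝ,
      (∫⁻ t : ℝ,
          (‖deriv (fun y : ℝ =>
              (1 / (2 * Real.pi) : ℂ) *
                ∫ ξ : ℝ, Complex.exp (Complex.I * ((y : ℂ) * ξ + (t : ℂ) * (ξ : ℂ) ^ 3)) *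
                  ∫ z : ℝ, Complex.exp (-Complex.I * z * ξ) * u₀ z) x‖₊ : ℝ≥0∞) ^ 2) ^
        ((1 : ℝ) / 2) ≤
      ENNReal.ofReal (C * (∫ y : ℝ, ‖u₀ y‖ ^ 2) ^ ((1 : ℝ) / 2)) := by
  refine ⟨1, one_pos, fun u₀ x => ?_⟩
  rw [one_mul, ← ENNReal.ofReal_rpow_of_nonneg (by positivity) (by positivity),
    ofReal_integral_norm_sq (u₀.memLp 2 volume)]
  refine ENNReal.rpow_le_rpow ?_ (by positivity)
  exact (airy_smoothing_general u₀.integrable (integrable_id_smul_schwartzMap (𝓕 u₀)) x).trans_le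
    (ENNReal.div_le_of_le_mul (le_mul_of_one_le_right' (by norm_num)))
end
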